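/- arXiv:1403.1473 — 3 statements merged into one kernel-verified Lean document; each statement's English description precedes it below -/
import Mathlib

section
/- For every integer N ≥ 1 and every convex w : {0,…,N} → ℝ there exists a linear potential w′ : {0,…,N} → ℝ (w′_m = a·m + b for some a, b ∈ ℝ) such that Γ(J_w) ≥ Γ(J_{w′}). -/
/-- The hypercube Jacobi matrix `J_w`: the `(N+1) × (N+1)` real symmetric matrix with
diagonal entries `N + w m` and off-diagonal entries `-h(m)` with `h(m) = √((m+1)(N-m))`. -/
noncomputable def hypJ (N : ℕ) (w : ℕ → ℝ) : Matrix (Fin (N + 1)) (Fin (N + 1)) ℝ :=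
  Matrix.of fun i j =>
    if i = j then (N : ℝ) + w (i : ℕ)
    else if (i : ℕ) + 1 = (j : ℕ) then
      -Real.sqrt (((i : ℕ) + 1) * ((N : ℝ) - (i : ℕ)))
    else if (j : ℕ) + 1 = (i : ℕ) then
      -Real.sqrt (((j : ℕ) + 1) * ((N : ℝ) - (j : ℕ)))
    else 0

/-- `μ` is an eigenvalue of the real matrix `A`. -/
def IsEigen {n : ℕ} (A : Matrix (Fin n) (Fin n) ℝ) (μ : ℝ) : Prop :=
  ∃ v : Fin n → ℝ, v ≠ 0 ∧ A.mulVec v = μ • v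

/-- `l1 < l2` are the two smallest eigenvalues of `A`. -/
def TwoSmallest {n : ℕ} (A : Matrix (Fin n) (Fin n) ℝ) (l1 l2 : ℝ) : Prop :=
  IsEigen A l1 ∧ IsEigen A l2 ∧ l1 < l2 ∧
    ∀ μ, IsEigen A μ → l1 ≤ μ ∧ (μ ≠ l1 → l2 ≤ μ)

/-!
Conjugating `J_w` by the square roots `√(N choose m)` turns `J_w v = μ v` into the recurrence
`(N + w m) f m - (N - m) f (m + 1) - m f (m - 1) = μ f m`, in which no square roots are left.

Off the diagonal `J_w` is nonpositive, so the recurrence for the least eigenvalue `l₁` has a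
positive solution `u`. If `w` is convex then `u` is log-concave: an increase of the ratios
`s m = u (m + 1) / u m` would propagate up to `m = N`, where the boundary forbids it. A solution
`f` for `l₂` gives `F = f / u`, an eigenfunction of the birth-death generator with rates
`(N - m) s m` and `m / s (m - 1)`. At an `m` where `|F (m + 1) - F m|` is maximal, log-concavity
yields `l₂ - l₁ ≥ s m + 1 / s m ≥ 2`. The zero potential, which is linear, has gap exactly `2`.
-/

section GroundState

open Matrix

lemma isEigen_iff_mem_spectrum {n : ℕ} {A : Matrix (Fin n) (Fin n) ℝ} {μ : ℝ} :
    IsEigen A μ ↔ μ ∈ spectrum ℝ A := by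
  rw [← spectrum_toLin', ← Module.End.hasEigenvalue_iff_mem_spectrum,
    Module.End.hasEigenvalue_iff, Submodule.ne_bot_iff]
  simp only [IsEigen, Module.End.mem_eigenspace_iff, toLin'_apply, and_comm]

variable {ι : Type*} [Fintype ι]

lemma dotProduct_mulVec_abs_le {A : Matrix ι ι ℝ} (hoff : ∀ i j, i ≠ j → A i j ≤ 0)
    (v : ι → ℝ) : |v| ⬝ᵥ A *ᵥ |v| ≤ v ⬝ᵥ A *ᵥ v := by
  simp only [dotProduct, mulVec, Finset.mul_sum, Pi.abs_apply]
  refine Finset.sum_le_sum fun i _ ↦ Finset.sum_le_sum fun j _ ↦ ?_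
  rw [mul_left_comm, mul_left_comm (v i), ← abs_mul]
  rcases eq_or_ne i j with rfl | hij
  · rw [abs_mul_self]
  · exact mul_le_mul_of_nonpos_left (le_abs_self _) (hoff i j hij)

lemma mulVec_abs_eq_zero_of_posSemidef {A : Matrix ι ι ℝ} (hA : A.PosSemidef)
    (hoff : ∀ i j, i ≠ j → A i j ≤ 0) {v : ι → ℝ} (hv : A *ᵥ v = 0) : A *ᵥ |v| = 0 := by
  refine (hA.dotProduct_mulVec_zero_iff |v|).mp (le_antisymm ?_ (hA.dotProduct_mulVec_nonneg _))
  simpa [hv] using dotProduct_mulVec_abs_le hoff v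

lemma mulVec_abs_eq_smul_of_least [DecidableEq ι] {A : Matrix ι ι ℝ} (hA : A.IsHermitian)
    (hoff : ∀ i j, i ≠ j → A i j ≤ 0) {l : ℝ} (hl : ∀ μ ∈ spectrum ℝ A, l ≤ μ) {v : ι → ℝ}
    (hv : A *ᵥ v = l • v) : A *ᵥ |v| = l • |v| := by
  let B : Matrix ι ι ℝ := A - l • 1
  have mulVec_B (x : ι → ℝ) : B *ᵥ x = A *ᵥ x - l • x := by
    rw [sub_mulVec, smul_mulVec, one_mulVec]
  have hB : B.PosSemidef := by
    refine posSemidef_iff_isHermitian_and_spectrum_nonneg.mpr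
      ⟨hA.sub (isHermitian_one.smul (IsSelfAdjoint.all l)), fun μ hμ ↦ ?_⟩
    have hμ' : μ + l ∈ spectrum ℝ A := by
      have hA_eq : A = algebraMap ℝ _ l + B := by simp [B, Algebra.algebraMap_eq_smul_one]
      rwa [hA_eq, spectrum.add_mem_add_iff]
    simpa using hl _ hμ'
  have hoffB (i j : ι) (hij : i ≠ j) : B i j ≤ 0 := by simpa [B, hij] using hoff i j hij
  have hvB : B *ᵥ v = 0 := by rw [mulVec_B, hv, sub_self]
  rw [← sub_eq_zero, ← mulVec_B]
  exact mulVec_abs_eq_zero_of_posSemidef hB hoffB hvB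

end GroundState

section MaximumPrinciple

lemma le_add_of_mul_eq_add {c d x y p q : ℝ} (hd : d ≠ 0) (heq : c * d = x + y)
    (hx : |x| ≤ p * |d|) (hy : |y| ≤ q * |d|) : c ≤ p + q := by
  refine le_of_mul_le_mul_right ?_ (abs_pos.mpr hd)
  calc c * |d| ≤ |c| * |d| := mul_le_mul_of_nonneg_right (le_abs_self c) (abs_nonneg d)
    _ = |x + y| := by rw [← abs_mul, heq]
    _ ≤ |x| + |y| := abs_add_le x y
    _ ≤ (p + q) * |d| := by linarith

lemma abs_mul_le_mul_abs {a b x y : ℝ} (ha : 0 ≤ a) (hab : a ≤ b) (hxy : |x| ≤ |y|) :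
    |a * x| ≤ b * |y| := by
  rw [abs_mul, abs_of_nonneg ha]
  exact mul_le_mul hab hxy (abs_nonneg x) (ha.trans hab)

end MaximumPrinciple

section HammingRecurrence

open Matrix

variable {N : ℕ} {w f : ℕ → ℝ} {l μ : ℝ}

lemma hypJ_isHermitian (N : ℕ) (w : ℕ → ℝ) : (hypJ N w).IsHermitian := by
  ext i j
  simp only [conjTranspose_apply, hypJ, of_apply, star_trivial]
  grind

lemma hypJ_nonpos_of_ne {i j : Fin (N + 1)} (hij : i ≠ j) : hypJ N w i j ≤ 0 := by
  simp only [hypJ, of_apply, hij, if_false]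
  split_ifs <;> simp

/-- The vector `m ↦ √(N choose m) * f m`: the coordinates, in the orthonormal basis in which
`hypJ` is written, of the function `b ↦ f |b|` on the hypercube. -/
noncomputable def binomialVec (N : ℕ) (f : ℕ → ℝ) : Fin (N + 1) → ℝ :=
  fun i ↦ √(N.choose i) * f i

/-- The eigenvalue equation of `hypJ N w` for the vector `binomialVec N f`, freed of square roots.
The values `f (N + 1)` and, at `m = 0`, the truncated `f (m - 1)` have coefficient `0`. -/
def HammingEigenEq (N : ℕ) (w : ℕ → ℝ) (μ : ℝ) (f : ℕ → ℝ) : Prop :=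
  ∀ m ≤ N, (N + w m) * f m - (N - m) * f (m + 1) - m * f (m - 1) = μ * f m

lemma sqrt_choose_pos {m : ℕ} (hm : m ≤ N) : 0 < √(N.choose m : ℝ) :=
  Real.sqrt_pos.mpr (mod_cast Nat.choose_pos hm)

lemma sqrt_mul_mul_sqrt {a b x y : ℝ} (ha : 0 ≤ a) (hb : 0 ≤ b) (h : a * y = b * x) :
    √(a * b) * √y = b * √x := by
  rw [← Real.sqrt_mul (mul_nonneg ha hb), show a * b * y = b ^ 2 * x by linear_combination b * h,
    Real.sqrt_mul (sq_nonneg b), Real.sqrt_sq hb]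

lemma succ_mul_choose_succ {m : ℕ} (hm : m ≤ N) :
    ((m : ℝ) + 1) * N.choose (m + 1) = (N - m) * N.choose m := by
  rw [← Nat.cast_sub hm, mul_comm, mul_comm ((N - m : ℕ) : ℝ)]
  exact_mod_cast Nat.choose_succ_right_eq N m

lemma sqrt_mul_sqrt_choose_succ {m : ℕ} (hm : m ≤ N) :
    √((m + 1) * (N - m)) * √(N.choose (m + 1)) = (N - m) * √(N.choose m) :=
  sqrt_mul_mul_sqrt (by positivity) (sub_nonneg.mpr (mod_cast hm)) (succ_mul_choose_succ hm)

lemma sqrt_mul_sqrt_choose {m : ℕ} (hm : m ≤ N) :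
    √((m + 1) * (N - m)) * √(N.choose m) = (m + 1) * √(N.choose (m + 1)) := by
  rw [mul_comm ((m : ℝ) + 1)]
  exact sqrt_mul_mul_sqrt (sub_nonneg.mpr (mod_cast hm)) (by positivity)
    (succ_mul_choose_succ hm).symm

lemma hypJ_mul_sqrt_choose (i j : Fin (N + 1)) :
    hypJ N w i j * √(N.choose j) = √(N.choose i) *
      ((if (j : ℕ) = i then N + w i else 0) - (if (j : ℕ) = i + 1 then (N : ℝ) - i else 0)
        - if (j : ℕ) + 1 = i then (i : ℝ) else 0) := by
  obtain ⟨i, hi⟩ := i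
  obtain ⟨j, hj⟩ := j
  simp only [hypJ, of_apply, Fin.mk.injEq]
  rcases eq_or_ne i j with rfl | hij
  · simp [mul_comm]
  rcases eq_or_ne (i + 1) j with rfl | hij_up
  · have hne : i + 1 + 1 ≠ i := by lia
    simp only [hij, hij.symm, hne, if_true, if_false]
    linear_combination -sqrt_mul_sqrt_choose_succ (Nat.lt_succ_iff.mp hi)
  rcases eq_or_ne (j + 1) i with rfl | hij_down
  · simp only [hij, hij.symm, hij_up, hij_up.symm, if_true, if_false, Nat.cast_succ]
    linear_combination -sqrt_mul_sqrt_choose (Nat.lt_succ_iff.mp hj)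
  · simp [hij, hij.symm, hij_up, hij_up.symm, hij_down]

lemma hypJ_mulVec_binomialVec (w f : ℕ → ℝ) (i : Fin (N + 1)) :
    (hypJ N w *ᵥ binomialVec N f) i = √(N.choose i) *
      ((N + w i) * f i - (N - i) * f (i + 1) - i * f (i - 1)) := by
  simp only [mulVec, dotProduct, binomialVec, ← mul_assoc, hypJ_mul_sqrt_choose]
  simp only [mul_assoc, ← Finset.mul_sum, sub_mul, ite_mul, zero_mul, Finset.sum_sub_distrib]
  obtain ⟨i, hi⟩ := i
  congr 3
  · rw [Fin.sum_univ_eq_sum_range (fun j ↦ if j = i then (N + w i) * f j else 0)]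
    simp [hi]
  · rw [Fin.sum_univ_eq_sum_range (fun j ↦ if j = i + 1 then (N * f j - i * f j) else 0)]
    rcases (Nat.lt_succ_iff.mp hi).eq_or_lt with rfl | hiN
    · simp
    · simp [hiN]
  · rw [Fin.sum_univ_eq_sum_range (fun j ↦ if j + 1 = i then i * f j else 0)]
    cases i with
    | zero => simp
    | succ i => simp; lia

lemma hypJ_mulVec_binomialVec_eq_smul_iff :
    hypJ N w *ᵥ binomialVec N f = μ • binomialVec N f ↔ HammingEigenEq N w μ f := by
  rw [funext_iff, Fin.forall_iff]
  simp only [Nat.lt_succ_iff]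
  refine forall₂_congr fun m hm ↦ ?_
  rw [hypJ_mulVec_binomialVec, Pi.smul_apply, binomialVec, smul_eq_mul, mul_left_comm]
  exact mul_right_inj' (sqrt_choose_pos hm).ne'

lemma binomialVec_surjective (N : ℕ) : Function.Surjective (binomialVec N) := by
  intro v
  refine ⟨fun m ↦ if hm : m < N + 1 then v ⟨m, hm⟩ / √(N.choose m) else 0, ?_⟩
  ext i
  simp only [binomialVec, i.is_lt, dif_pos]
  exact mul_div_cancel₀ _ (sqrt_choose_pos i.is_le).ne'

lemma binomialVec_ne_zero_iff : binomialVec N f ≠ 0 ↔ ∃ m ≤ N, f m ≠ 0 := by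
  simp only [Function.ne_iff, Fin.exists_iff, Nat.lt_succ_iff, binomialVec, Pi.zero_apply]
  refine exists_congr fun m ↦ ⟨?_, ?_⟩
  · rintro ⟨hm, h⟩
    exact ⟨hm, right_ne_zero_of_mul h⟩
  · rintro ⟨hm, h⟩
    exact ⟨hm, mul_ne_zero (sqrt_choose_pos hm).ne' h⟩

lemma isEigen_hypJ_iff :
    IsEigen (hypJ N w) μ ↔ ∃ f, (∃ m ≤ N, f m ≠ 0) ∧ HammingEigenEq N w μ f := by
  rw [IsEigen, (binomialVec_surjective N).exists]
  simp only [binomialVec_ne_zero_iff, hypJ_mulVec_binomialVec_eq_smul_iff]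

namespace HammingEigenEq

lemma abs_of_least (hf : HammingEigenEq N w l f) (hl : ∀ μ, IsEigen (hypJ N w) μ → l ≤ μ) :
    HammingEigenEq N w l |f| := by
  have hv := hypJ_mulVec_binomialVec_eq_smul_iff.mpr hf
  have habs := mulVec_abs_eq_smul_of_least (hypJ_isHermitian N w) (fun i j ↦ hypJ_nonpos_of_ne)
    (fun μ hμ ↦ hl μ (isEigen_iff_mem_spectrum.mpr hμ)) hv
  have binomialVec_abs : |binomialVec N f| = binomialVec N |f| := by
    ext i
    simp [binomialVec, abs_mul]
  rwa [binomialVec_abs, hypJ_mulVec_binomialVec_eq_smul_iff] at habs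

lemma eq_zero_iff_succ_eq_zero (hf : HammingEigenEq N w μ f) (hf0 : 0 ≤ f) {m : ℕ}
    (hm : m < N) : f m = 0 ↔ f (m + 1) = 0 := by
  have hmN : (m : ℝ) + 1 ≤ N := mod_cast hm
  constructor <;> intro hz
  · have hfm := hf m hm.le
    have hprev : 0 ≤ m * f (m - 1) := mul_nonneg m.cast_nonneg (hf0 _)
    have hnext : (N - m) * f (m + 1) ≤ 0 := by
      rw [hz] at hfm
      linarith
    exact (nonpos_of_mul_nonpos_right hnext (by linarith)).antisymm (hf0 _)
  · have hfm := hf (m + 1) hm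
    have hnext : 0 ≤ (N - (m + 1)) * f (m + 2) := mul_nonneg (by linarith) (hf0 _)
    have hprev : ((m : ℝ) + 1) * f m ≤ 0 := by
      rw [hz, Nat.add_sub_cancel, Nat.cast_succ] at hfm
      linarith
    exact (nonpos_of_mul_nonpos_right hprev (by positivity)).antisymm (hf0 _)

lemma pos_of_nonneg (hf : HammingEigenEq N w μ f) (hf0 : 0 ≤ f) (hne : ∃ k ≤ N, f k ≠ 0)
    {m : ℕ} (hm : m ≤ N) : 0 < f m := by
  have eq_zero_iff {j : ℕ} (hj : j ≤ N) : f j = 0 ↔ f 0 = 0 := by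
    induction j with
    | zero => rfl
    | succ j ih => rw [← hf.eq_zero_iff_succ_eq_zero hf0 hj, ih (by lia)]
  obtain ⟨k, hk, hfk⟩ := hne
  refine (hf0 m).lt_of_ne' fun hfm ↦ hfk ?_
  rwa [eq_zero_iff hk, ← eq_zero_iff hm]

lemma congr {g : ℕ → ℝ} (hf : HammingEigenEq N w μ f) (hfg : ∀ m ≤ N, f m = g m) :
    HammingEigenEq N w μ g := by
  intro m hm
  rw [← hfg m hm, ← hfg (m - 1) (by lia), ← hf m hm]
  rcases hm.eq_or_lt with rfl | hm
  · simp
  · rw [hfg (m + 1) hm]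

end HammingEigenEq

lemma exists_pos_hammingEigenEq (he : IsEigen (hypJ N w) l)
    (hl : ∀ μ, IsEigen (hypJ N w) μ → l ≤ μ) :
    ∃ u : ℕ → ℝ, HammingEigenEq N w l u ∧ ∀ m, 0 < u m := by
  obtain ⟨f, hf0, hf⟩ := isEigen_hypJ_iff.mp he
  have habs := hf.abs_of_least hl
  have hpos {m : ℕ} (hm : m ≤ N) : 0 < |f| m :=
    habs.pos_of_nonneg (abs_nonneg f) (by simpa using hf0) hm
  refine ⟨fun m ↦ if m ≤ N then |f| m else 1, habs.congr fun m hm ↦ (if_pos hm).symm, fun m ↦ ?_⟩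
  dsimp only
  split_ifs with hm
  exacts [hpos hm, one_pos]

end HammingRecurrence

section LogConcavity

variable {N : ℕ} {E s : ℕ → ℝ}

/-- The discrete Riccati equation that the successive ratios `s m = u (m + 1) / u m` of a positive
solution `u` of `HammingEigenEq N w l u` satisfy, with `E m = N + w m - l`. The values `s N` and,
at `m = 0`, the truncated `s (m - 1)` have coefficient `0`. -/
def RiccatiEq (N : ℕ) (E s : ℕ → ℝ) : Prop :=
  ∀ m ≤ N, (N - m) * s m + m * (s (m - 1))⁻¹ = E m

/-- The part of the increment of `m ↦ (N - m) * s m + m / s (m - 1)` from `m` to `m + 1` that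
comes from the variation of `s`; the other part is `1 / s m - s m`. -/
noncomputable def ratioVariation (N : ℕ) (s : ℕ → ℝ) (m : ℕ) : ℝ :=
  (N - (m + 1)) * (s (m + 1) - s m) + m * ((s m)⁻¹ - (s (m - 1))⁻¹)

lemma next_sub_pos_of_ratioVariation_succ_pos {m : ℕ} (hs : 0 < s m) (hlt : s m < s (m + 1))
    (hpos : 0 < ratioVariation N s (m + 1)) :
    0 < (N - (m + 2)) * (s (m + 2) - s (m + 1)) := by
  rw [ratioVariation, Nat.add_sub_cancel] at hpos
  have hinv : ((m + 1 : ℕ) : ℝ) * ((s (m + 1))⁻¹ - (s m)⁻¹) ≤ 0 :=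
    mul_nonpos_of_nonneg_of_nonpos (Nat.cast_nonneg _)
      (sub_nonpos.mpr (inv_anti₀ hs hlt.le))
  push_cast at hpos hinv
  rw [show (N : ℝ) - (m + 2) = N - (m + 1 + 1) by ring]
  linarith

namespace RiccatiEq

lemma sub_eq_add_ratioVariation (hrec : RiccatiEq N E s) {m : ℕ} (hm : m < N) :
    E (m + 1) - E m = (s m)⁻¹ - s m + ratioVariation N s m := by
  rw [← hrec m hm.le, ← hrec (m + 1) hm, ratioVariation, Nat.add_sub_cancel]
  push_cast
  ring

lemma ratioVariation_lt_succ (hrec : RiccatiEq N E s)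
    (hE : ∀ m, m + 2 ≤ N → E (m + 1) - E m ≤ E (m + 2) - E (m + 1)) {m : ℕ} (hm : m + 2 ≤ N)
    (hs : 0 < s m) (hlt : s m < s (m + 1)) :
    ratioVariation N s m < ratioVariation N s (m + 1) := by
  have hconvex := hE m hm
  rw [hrec.sub_eq_add_ratioVariation hm, hrec.sub_eq_add_ratioVariation (by lia)] at hconvex
  have hinv : (s (m + 1))⁻¹ < (s m)⁻¹ := inv_strictAnti₀ hs hlt
  linarith

lemma ratioVariation_nonpos_of_lt (hrec : RiccatiEq N E s)
    (hE : ∀ m, m + 2 ≤ N → E (m + 1) - E m ≤ E (m + 2) - E (m + 1)) (hs : ∀ m < N, 0 < s m)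
    {m : ℕ} (hm : m + 2 ≤ N) (hlt : s m < s (m + 1)) : ratioVariation N s m ≤ 0 := by
  by_contra! hpos
  have hsm : 0 < s m := hs m (by lia)
  have hpos_succ : 0 < ratioVariation N s (m + 1) :=
    hpos.trans (hrec.ratioVariation_lt_succ hE hm hsm hlt)
  have hnext := next_sub_pos_of_ratioVariation_succ_pos hsm hlt hpos_succ
  rcases hm.eq_or_lt with rfl | hm'
  · simp at hnext
  · have hmN : (m : ℝ) + 2 ≤ N := mod_cast hm
    have hlt_succ : s (m + 1) < s (m + 2) :=
      sub_pos.mp (pos_of_mul_pos_right hnext (by linarith))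
    exact (ratioVariation_nonpos_of_lt hrec hE hs hm' hlt_succ).not_gt hpos_succ
termination_by N - m

lemma succ_le (hrec : RiccatiEq N E s)
    (hE : ∀ m, m + 2 ≤ N → E (m + 1) - E m ≤ E (m + 2) - E (m + 1)) (hs : ∀ m < N, 0 < s m)
    {m : ℕ} (hm : m + 2 ≤ N) : s (m + 1) ≤ s m := by
  by_contra! hlt
  refine (hrec.ratioVariation_nonpos_of_lt hE hs hm hlt).not_gt ?_
  have hmN : (m : ℝ) + 2 ≤ N := mod_cast hm
  have hright : 0 < (N - (m + 1)) * (s (m + 1) - s m) :=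
    mul_pos (by linarith) (sub_pos.mpr hlt)
  have hleft : 0 ≤ m * ((s m)⁻¹ - (s (m - 1))⁻¹) := by
    cases m with
    | zero => simp
    | succ k =>
      have hle : s (k + 1) ≤ s k := succ_le hrec hE hs (by lia)
      exact mul_nonneg (Nat.cast_nonneg _)
        (sub_nonneg.mpr (inv_anti₀ (hs (k + 1) (by lia)) hle))
  exact add_pos_of_pos_of_nonneg hright hleft

end RiccatiEq

end LogConcavity

section DoobTransform

variable {N : ℕ} {s F : ℕ → ℝ} {γ : ℝ}

/-- `F` is an eigenfunction, with eigenvalue `-γ`, of the generator of the birth-death chain on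
`{0, …, N}` with birth rates `(N - m) * s m` and death rates `m / s (m - 1)`. For
`s m = u (m + 1) / u m` this chain is the Doob transform of `hypJ` by the ground state `u`. -/
def BirthDeathEigenEq (N : ℕ) (s : ℕ → ℝ) (γ : ℝ) (F : ℕ → ℝ) : Prop :=
  ∀ m ≤ N, (N - m) * s m * (F (m + 1) - F m) - m * (s (m - 1))⁻¹ * (F m - F (m - 1)) = -γ * F m

lemma two_le_inv_add_self {x : ℝ} (hx : 0 < x) : 2 ≤ x⁻¹ + x := by
  have hsq : x⁻¹ + x - 2 = (x - 1) ^ 2 / x := by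
    field_simp
    ring
  have hnonneg : 0 ≤ (x - 1) ^ 2 / x := by positivity
  linarith

namespace BirthDeathEigenEq

lemma mul_sub_eq (hF : BirthDeathEigenEq N s γ F) {m : ℕ} (hm : m < N) :
    ((m + 1) * (s m)⁻¹ + (N - m) * s m - γ) * (F (m + 1) - F m) =
      (N - (m + 1)) * s (m + 1) * (F (m + 2) - F (m + 1)) +
        m * (s (m - 1))⁻¹ * (F m - F (m - 1)) := by
  have hFm := hF m hm.le
  have hFm' := hF (m + 1) hm
  rw [Nat.add_sub_cancel, Nat.cast_succ] at hFm'
  linear_combination hFm - hFm'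

lemma exists_sub_ne_zero (hF : BirthDeathEigenEq N s γ F) (hγ : γ ≠ 0)
    (hne : ∃ k ≤ N, F k ≠ 0) : ∃ m < N, F (m + 1) - F m ≠ 0 := by
  by_contra! hconst
  obtain ⟨k, hk, hFk⟩ := hne
  have hright : (N - k) * s k * (F (k + 1) - F k) = 0 := by
    rcases hk.eq_or_lt with rfl | hkN
    · simp
    · rw [hconst k hkN, mul_zero]
  have hleft : k * (s (k - 1))⁻¹ * (F k - F (k - 1)) = 0 := by
    cases k with
    | zero => simp
    | succ j => rw [Nat.add_sub_cancel, hconst j hk, mul_zero]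
  have heq := hF k hk
  rw [hright, hleft, sub_zero] at heq
  exact mul_ne_zero (neg_ne_zero.mpr hγ) hFk heq.symm

lemma exists_max_abs_sub (hF : BirthDeathEigenEq N s γ F) (hγ : γ ≠ 0)
    (hne : ∃ k ≤ N, F k ≠ 0) :
    ∃ m < N, F (m + 1) - F m ≠ 0 ∧ ∀ j < N, |F (j + 1) - F j| ≤ |F (m + 1) - F m| := by
  obtain ⟨k, hk, hFk⟩ := hF.exists_sub_ne_zero hγ hne
  obtain ⟨m, hm, hmax⟩ := Finset.exists_max_image (Finset.range N) (fun j ↦ |F (j + 1) - F j|)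
    ⟨k, Finset.mem_range.mpr hk⟩
  simp only [Finset.mem_range] at hm hmax
  exact ⟨m, hm, abs_pos.mp ((abs_pos.mpr hFk).trans_le (hmax k hk)), hmax⟩

lemma two_le (hF : BirthDeathEigenEq N s γ F) (hγ : γ ≠ 0) (hne : ∃ k ≤ N, F k ≠ 0)
    (hs : ∀ m < N, 0 < s m) (hanti : ∀ m, m + 2 ≤ N → s (m + 1) ≤ s m) : 2 ≤ γ := by
  obtain ⟨m, hm, hd, hmax⟩ := hF.exists_max_abs_sub hγ hne
  have hmN : (0 : ℝ) ≤ N - (m + 1) := sub_nonneg.mpr (mod_cast hm)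
  have hright : |(N - (m + 1)) * s (m + 1) * (F (m + 2) - F (m + 1))| ≤
      (N - (m + 1)) * s m * |F (m + 1) - F m| := by
    rcases (Nat.succ_le_of_lt hm).eq_or_lt with rfl | hm'
    · simp
    · have hs' : 0 ≤ (N - (m + 1)) * s (m + 1) := mul_nonneg hmN (hs _ hm').le
      have hle : (N - (m + 1)) * s (m + 1) ≤ (N - (m + 1)) * s m :=
        mul_le_mul_of_nonneg_left (hanti m hm') hmN
      exact abs_mul_le_mul_abs hs' hle (hmax (m + 1) hm')
  have hleft : |m * (s (m - 1))⁻¹ * (F m - F (m - 1))| ≤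
      m * (s m)⁻¹ * |F (m + 1) - F m| := by
    cases m with
    | zero => simp
    | succ k =>
      have hsk : 0 < s k := hs k (by lia)
      have hle : ((k + 1 : ℕ) : ℝ) * (s k)⁻¹ ≤ (k + 1 : ℕ) * (s (k + 1))⁻¹ :=
        mul_le_mul_of_nonneg_left (inv_anti₀ (hs _ hm) (hanti k hm)) (Nat.cast_nonneg _)
      exact abs_mul_le_mul_abs (by positivity) hle (hmax k (by lia))
  have hbound := le_add_of_mul_eq_add hd (hF.mul_sub_eq hm) hright hleft
  have hγ_ge : (s m)⁻¹ + s m ≤ γ := by linarith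
  exact (two_le_inv_add_self (hs m hm)).trans hγ_ge

end BirthDeathEigenEq

end DoobTransform

section Gap

variable {N : ℕ} {w f u : ℕ → ℝ} {l μ : ℝ}

lemma cast_mul_inv_succ_div (u : ℕ → ℝ) (m : ℕ) :
    (m : ℝ) * (u (m - 1 + 1) / u (m - 1))⁻¹ = m * (u (m - 1) / u m) := by
  cases m <;> simp

namespace HammingEigenEq

lemma riccatiEq (hu : HammingEigenEq N w l u) (hpos : ∀ m, 0 < u m) :
    RiccatiEq N (fun m ↦ N + w m - l) fun m ↦ u (m + 1) / u m := by
  intro m hm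
  have hum := hu m hm
  have hne := (hpos m).ne'
  rw [cast_mul_inv_succ_div]
  field_simp
  linarith

lemma birthDeathEigenEq (hu : HammingEigenEq N w l u) (hpos : ∀ m, 0 < u m)
    (hf : HammingEigenEq N w μ f) :
    BirthDeathEigenEq N (fun m ↦ u (m + 1) / u m) (μ - l) fun m ↦ f m / u m := by
  intro m hm
  have hum := hu m hm
  have hfm := hf m hm
  have hne := (hpos m).ne'
  have hne_succ := (hpos (m + 1)).ne'
  have hne_pred := (hpos (m - 1)).ne'
  rw [cast_mul_inv_succ_div]
  field_simp
  linear_combination f m * hum - u m * hfm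

lemma le_of_le_potential {c : ℝ} (hf : HammingEigenEq N w μ f) (hne : ∃ m ≤ N, f m ≠ 0)
    (hw : ∀ m ≤ N, c ≤ w m) : c ≤ μ := by
  obtain ⟨k, hk, hfk⟩ := hne
  obtain ⟨m, hm, hmax⟩ := Finset.exists_max_image (Finset.Iic N) (fun j ↦ |f j|)
    ⟨k, Finset.mem_Iic.mpr hk⟩
  simp only [Finset.mem_Iic] at hm hmax
  have hfm : f m ≠ 0 := abs_pos.mp ((abs_pos.mpr hfk).trans_le (hmax k hk))
  have hright : |(N - m) * f (m + 1)| ≤ (N - m) * |f m| := by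
    rcases hm.eq_or_lt with rfl | hmN
    · simp
    · exact abs_mul_le_mul_abs (sub_nonneg.mpr (mod_cast hm)) le_rfl (hmax _ hmN)
  have hleft : |m * f (m - 1)| ≤ m * |f m| :=
    abs_mul_le_mul_abs m.cast_nonneg le_rfl (hmax _ (by lia))
  have heq : (N + w m - μ) * f m = (N - m) * f (m + 1) + m * f (m - 1) := by
    linear_combination hf m hm
  have hbound := le_add_of_mul_eq_add hfm heq hright hleft
  linarith [hw m hm]

end HammingEigenEq

theorem two_le_gap_hypJ_of_convex {l1 l2 : ℝ}
    (hw : ∀ m : ℕ, 1 ≤ m → m < N → 0 ≤ w (m - 1) - 2 * w m + w (m + 1))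
    (h : TwoSmallest (hypJ N w) l1 l2) : 2 ≤ l2 - l1 := by
  obtain ⟨hl1, hl2, hlt, hmin⟩ := h
  obtain ⟨u, hu, hpos⟩ := exists_pos_hammingEigenEq hl1 fun μ hμ ↦ (hmin μ hμ).1
  obtain ⟨f, ⟨k, hk, hfk⟩, hf⟩ := isEigen_hypJ_iff.mp hl2
  have hs (m : ℕ) (_ : m < N) : 0 < u (m + 1) / u m := div_pos (hpos _) (hpos _)
  have hconvex (m : ℕ) (hm : m + 2 ≤ N) :
      N + w (m + 1) - l1 - (N + w m - l1) ≤ N + w (m + 2) - l1 - (N + w (m + 1) - l1) := by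
    have := hw (m + 1) (by lia) hm
    rw [Nat.add_sub_cancel] at this
    linarith
  exact (hu.birthDeathEigenEq hpos hf).two_le (sub_ne_zero.mpr hlt.ne')
    ⟨k, hk, div_ne_zero hfk (hpos k).ne'⟩ hs fun m hm ↦ (hu.riccatiEq hpos).succ_le hconvex hs hm

lemma isEigen_hypJ_zero_zero (N : ℕ) : IsEigen (hypJ N 0) 0 :=
  isEigen_hypJ_iff.mpr ⟨1, ⟨0, N.zero_le, one_ne_zero⟩, fun m _ ↦ by simp⟩

lemma isEigen_hypJ_zero_two (hN : N ≠ 0) : IsEigen (hypJ N 0) 2 := by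
  refine isEigen_hypJ_iff.mpr ⟨fun m ↦ N - 2 * m, ⟨0, N.zero_le, by simpa using hN⟩, ?_⟩
  rintro (_ | m) - <;> simp only [Pi.zero_apply, Nat.add_sub_cancel] <;> push_cast <;> ring

theorem gap_hypJ_zero_le_two (hN : N ≠ 0) {m1 m2 : ℝ}
    (h : TwoSmallest (hypJ N 0) m1 m2) : m2 - m1 ≤ 2 := by
  obtain ⟨hm1, -, -, hmin⟩ := h
  obtain ⟨f, hne, hf⟩ := isEigen_hypJ_iff.mp hm1
  have hm1_nonneg : 0 ≤ m1 := hf.le_of_le_potential hne fun _ _ ↦ le_rfl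
  have hm1_le : m1 ≤ 0 := (hmin 0 (isEigen_hypJ_zero_zero N)).1
  have hm2_le : m2 ≤ 2 := (hmin 2 (isEigen_hypJ_zero_two hN)).2 (by linarith)
  linarith

end Gap

/-- for every convex `w` on `{0,…,N}` there is a linear potential
`w' m = a * m + b` with `Γ(J_w) ≥ Γ(J_{w'})`. -/
theorem hypercube_convex_ge_linear (N : ℕ) (hN : 1 ≤ N) (w : ℕ → ℝ)
    (hw : ∀ m : ℕ, 1 ≤ m → m < N → 0 ≤ w (m - 1) - 2 * w m + w (m + 1))
    (l1 l2 : ℝ) (h : TwoSmallest (hypJ N w) l1 l2) :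
    ∃ a b : ℝ, ∀ m1 m2 : ℝ,
      TwoSmallest (hypJ N (fun m => a * (m : ℝ) + b)) m1 m2 →
      l2 - l1 ≥ m2 - m1 := by
  refine ⟨0, 0, fun m1 m2 hm ↦ ?_⟩
  have hzero : (fun m : ℕ ↦ (0 : ℝ) * m + 0) = 0 := by
    ext m
    simp
  rw [hzero] at hm
  exact (gap_hypJ_zero_le_two (by lia) hm).trans (two_le_gap_hypJ_of_convex hw h)
end

section
/- Let N ≥ 1 and w : {0,…,N} → ℝ, and let λ_1 < λ_2 be the two smallest eigenvalues of J_w with unit eigenvectors v(λ_1), v(λ_2), where v(λ_1) is chosen componentwise positive and v_0(λ_2) > 0. Then the sequence (v_m(λ_2)/v_m(λ_1))_{m=0}^{N} is strictly decreasing; consequently the sequence (v_m(λ_2)² − v_m(λ_1)²)_{m=0}^{N} has at most two generalized zeros, and (by orthogonality of the eigenvectors) at least one generalized zero. -/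
open scoped Classical

/-!
Dividing by the positive ground state `v1` turns the eigenvalue problem for a Jacobi matrix with
off-diagonal entries `-a m` into one for a weighted path, with vertex weights `p m = v1 m ^ 2` and
conductances `c m = a m * v1 m * v1 (m + 1)`: the ratio `r = v2 / v1` has mean zero and attains
equality in the Poincaré inequality with constant `l2 - l1`. If `r` had both an increasing and a
decreasing step, then flipping all increasing steps would give a sequence `f` with the same energy
but larger variance: `f - r` and `f + r` are both nonincreasing and not constant, hence strictly
positively correlated by Chebyshev's sum inequality. So `r` is monotone, and strictly so because the
partial sums of `p * r`, proportional to the increments of `r`, cannot touch zero in between.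

The generalized zeros of `v2 ^ 2 - v1 ^ 2 = (v2 - v1) * (v2 + v1)` are among those of the two
factors, and each factor is positive times a strictly decreasing sequence `r ∓ 1`.
-/

section GeneralizedZeros

/-- The generalized zeros of `u` among the indices `0, …, N`. The last index has no successor, so it
only counts when `u N = 0`. -/
noncomputable def generalizedZeros (N : ℕ) (u : ℕ → ℝ) : Finset ℕ :=
  (Finset.range (N + 1)).filter fun m => u m = 0 ∨ (m < N ∧ u m * u (m + 1) < 0)

variable {N m : ℕ} {u v : ℕ → ℝ}

lemma mem_generalizedZeros :
    m ∈ generalizedZeros N u ↔ m ≤ N ∧ (u m = 0 ∨ (m < N ∧ u m * u (m + 1) < 0)) := by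
  rw [generalizedZeros, Finset.mem_filter, Finset.mem_range, Nat.lt_succ_iff]

lemma generalizedZeros_mul_subset :
    generalizedZeros N (fun m => u m * v m) ⊆ generalizedZeros N u ∪ generalizedZeros N v := by
  intro m hm
  simp only [Finset.mem_union, mem_generalizedZeros] at hm ⊢
  obtain ⟨hmN, huv | ⟨hlt, hneg⟩⟩ := hm
  · rcases mul_eq_zero.1 huv with hu | hv
    · exact .inl ⟨hmN, .inl hu⟩
    · exact .inr ⟨hmN, .inl hv⟩
  · rw [mul_mul_mul_comm] at hneg
    rcases mul_neg_iff.1 hneg with ⟨-, hv⟩ | ⟨hu, -⟩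
    · exact .inr ⟨hmN, .inr ⟨hlt, hv⟩⟩
    · exact .inl ⟨hmN, .inr ⟨hlt, hu⟩⟩

lemma generalizedZeros_eq_of_eq_pos_mul {x : ℕ → ℝ} (hv : ∀ m ≤ N, 0 < v m)
    (hx : ∀ m ≤ N, x m = v m * u m) : generalizedZeros N x = generalizedZeros N u := by
  ext m
  simp only [mem_generalizedZeros]
  refine and_congr_right fun hm => or_congr ?_ (and_congr_right fun hlt => ?_)
  · rw [hx m hm, mul_eq_zero_iff_left (hv m hm).ne']
  · rw [hx m hm, hx (m + 1) hlt, mul_mul_mul_comm]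
    exact smul_neg_iff_of_pos_left (mul_pos (hv m hm) (hv (m + 1) hlt))

lemma card_generalizedZeros_le_one (hu : StrictAntiOn u (Set.Iic N)) :
    (generalizedZeros N u).card ≤ 1 := by
  have nonneg_and_neg : ∀ m ∈ generalizedZeros N u, 0 ≤ u m ∧ ∀ j ≤ N, m < j → u j < 0 := by
    intro m hm
    obtain ⟨hmN, hzero | ⟨hlt, hneg⟩⟩ := mem_generalizedZeros.1 hm
    · exact ⟨hzero.ge, fun j hj hmj => hzero ▸ hu hmN hj hmj⟩
    · have hstep : u (m + 1) < u m := hu hmN hlt m.lt_succ_self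
      obtain ⟨hpos, hneg'⟩ : 0 < u m ∧ u (m + 1) < 0 := by
        rcases mul_neg_iff.1 hneg with h | h
        · exact h
        · linarith
      exact ⟨hpos.le, fun j hj hmj => (hu.antitoneOn hlt hj hmj).trans_lt hneg'⟩
  refine Finset.card_le_one.2 fun i hi j hj => ?_
  have hiN := (mem_generalizedZeros.1 hi).1
  have hjN := (mem_generalizedZeros.1 hj).1
  by_contra hij
  rcases lt_or_gt_of_ne hij with hlt | hlt
  · exact ((nonneg_and_neg i hi).2 j hjN hlt).not_ge (nonneg_and_neg j hj).1
  · exact ((nonneg_and_neg j hj).2 i hiN hlt).not_ge (nonneg_and_neg i hi).1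

lemma card_generalizedZeros_sub_mul_le_one (hv : ∀ m ≤ N, 0 < v m)
    (hratio : StrictAntiOn (fun m => u m / v m) (Set.Iic N)) (t : ℝ) :
    (generalizedZeros N fun m => u m - t * v m).card ≤ 1 := by
  have hfactor : ∀ m ≤ N, u m - t * v m = v m * (u m / v m - t) := fun m hm => by
    rw [mul_sub, mul_div_cancel₀ _ (hv m hm).ne', mul_comm t]
  rw [generalizedZeros_eq_of_eq_pos_mul hv hfactor]
  exact card_generalizedZeros_le_one fun i hi j hj hij => sub_lt_sub_right (hratio hi hj hij) t

lemma card_generalizedZeros_sq_sub_sq_le_two (hv : ∀ m ≤ N, 0 < v m)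
    (hratio : StrictAntiOn (fun m => u m / v m) (Set.Iic N)) :
    (generalizedZeros N fun m => u m ^ 2 - v m ^ 2).card ≤ 2 := by
  have hfactor : (fun m => u m ^ 2 - v m ^ 2) =
      fun m => (u m - 1 * v m) * (u m - (-1) * v m) := by
    ext m
    ring
  rw [hfactor]
  calc _ ≤ _ := Finset.card_le_card generalizedZeros_mul_subset
    _ ≤ _ := Finset.card_union_le _ _
    _ ≤ 1 + 1 := add_le_add (card_generalizedZeros_sub_mul_le_one hv hratio 1)
      (card_generalizedZeros_sub_mul_le_one hv hratio (-1))

lemma generalizedZeros_nonempty_of_sum_eq_zero (hsum : ∑ m ∈ Finset.range (N + 1), u m = 0) :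
    (generalizedZeros N u).Nonempty := by
  by_contra hempty
  have hne {m : ℕ} (hm : m ≤ N) : u m ≠ 0 := fun h0 =>
    hempty ⟨m, mem_generalizedZeros.2 ⟨hm, .inl h0⟩⟩
  have hstep {m : ℕ} (hm : m < N) : 0 < u m * u (m + 1) :=
    (mul_ne_zero (hne hm.le) (hne hm)).lt_or_gt.resolve_left fun hneg =>
      hempty ⟨m, mem_generalizedZeros.2 ⟨hm.le, .inr ⟨hm, hneg⟩⟩⟩
  have hsame : ∀ m ≤ N, 0 < u 0 * u m := by
    intro m
    induction m with
    | zero => exact fun hm => mul_self_pos.2 (hne hm)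
    | succ k ih =>
      intro hk
      have : 0 < (u k * u k) * (u 0 * u (k + 1)) := by
        linarith [mul_pos (ih (by omega)) (hstep hk)]
      exact pos_of_mul_pos_right this (mul_self_nonneg _)
  have hpos : 0 < ∑ m ∈ Finset.range (N + 1), u 0 * u m :=
    Finset.sum_pos (fun m hm => hsame m (Finset.mem_range_succ_iff.1 hm)) ⟨0, by simp⟩
  rw [← Finset.mul_sum, hsum, mul_zero] at hpos
  exact hpos.false

end GeneralizedZeros

lemma sum_mul_sum_mul_lt_of_monovaryOn {ι R : Type*} [CommRing R] [LinearOrder R]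
    [IsStrictOrderedRing R] {s : Finset ι} {p f g : ι → R} (hp : ∀ i ∈ s, 0 < p i)
    (hfg : MonovaryOn f g s) {i j : ι} (hi : i ∈ s) (hj : j ∈ s) (hf : f i < f j)
    (hg : g i < g j) :
    (∑ k ∈ s, p k * f k) * ∑ k ∈ s, p k * g k < (∑ k ∈ s, p k) * ∑ k ∈ s, p k * (f k * g k) := by
  have lagrange : ∑ k ∈ s, ∑ l ∈ s, p k * p l * ((f l - f k) * (g l - g k)) =
      2 * ((∑ k ∈ s, p k) * (∑ k ∈ s, p k * (f k * g k)) -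
        (∑ k ∈ s, p k * f k) * ∑ k ∈ s, p k * g k) := by
    have expand (k l : ι) : p k * p l * ((f l - f k) * (g l - g k)) =
        p k * (p l * (f l * g l)) + p k * (f k * g k) * p l -
          p k * f k * (p l * g l) - p k * g k * (p l * f l) := by ring
    simp only [expand, Finset.sum_sub_distrib, Finset.sum_add_distrib, ← Finset.sum_mul_sum]
    ring
  have hterm : ∀ k ∈ s, ∀ l ∈ s, 0 ≤ p k * p l * ((f l - f k) * (g l - g k)) := fun k hk l hl =>
    mul_nonneg (mul_pos (hp k hk) (hp l hl)).le (hfg.sub_mul_sub_nonneg hk hl)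
  have hpos : 0 < ∑ k ∈ s, ∑ l ∈ s, p k * p l * ((f l - f k) * (g l - g k)) :=
    Finset.sum_pos' (fun k hk => Finset.sum_nonneg (hterm k hk)) ⟨i, hi,
      Finset.sum_pos' (hterm i hi) ⟨j, hj, mul_pos (mul_pos (hp i hi) (hp j hj))
        (mul_pos (sub_pos.2 hf) (sub_pos.2 hg))⟩⟩
  linarith

section WeightedPath

/-- The Dirichlet form of the path `0 — 1 — ⋯ — N` whose edge `{m, m + 1}` has conductance `c m`. -/
def dirichletForm (N : ℕ) (c f g : ℕ → ℝ) : ℝ :=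
  ∑ m ∈ Finset.range N, c m * ((f (m + 1) - f m) * (g (m + 1) - g m))

/-- `r` is an eigenfunction, with eigenvalue `μ`, of the Laplacian of the path with conductances `c`
and vertex weights `p`, expressed in weak form by testing against all `g`. -/
def IsWeakEigenfunction (N : ℕ) (p c : ℕ → ℝ) (μ : ℝ) (r : ℕ → ℝ) : Prop :=
  ∀ g, dirichletForm N c g r = μ * ∑ m ∈ Finset.range (N + 1), p m * (g m * r m)

/-- The Poincaré inequality with constant `μ` for the path with conductances `c` and vertex weights
`p`; the weights need not have total mass `1`. -/
def HasSpectralGap (N : ℕ) (p c : ℕ → ℝ) (μ : ℝ) : Prop :=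
  ∀ f : ℕ → ℝ, ∑ m ∈ Finset.range (N + 1), p m * f m = 0 →
    μ * ∑ m ∈ Finset.range (N + 1), p m * f m ^ 2 ≤ dirichletForm N c f f

/-- The nonincreasing sequence, starting at `0`, whose increments have the same absolute values as
those of `r`. It serves as a competitor of `r` with the same energy in the Poincaré inequality. -/
def monotoneUnfolding (r : ℕ → ℝ) (m : ℕ) : ℝ :=
  -∑ i ∈ Finset.range m, |r (i + 1) - r i|

lemma monotoneUnfolding_succ_sub (r : ℕ → ℝ) (m : ℕ) :
    monotoneUnfolding r (m + 1) - monotoneUnfolding r m = -|r (m + 1) - r m| := by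
  simp only [monotoneUnfolding, Finset.sum_range_succ]
  ring

variable {N : ℕ} {p c r : ℕ → ℝ} {μ : ℝ}

lemma eq_apply_zero_of_dirichletForm_self_eq_zero (hc : ∀ m < N, 0 < c m)
    (hr : dirichletForm N c r r = 0) : ∀ m ≤ N, r m = r 0 := by
  have hnonneg : ∀ m ∈ Finset.range N, 0 ≤ c m * ((r (m + 1) - r m) * (r (m + 1) - r m)) :=
    fun m hm => mul_nonneg (hc m (Finset.mem_range.1 hm)).le (mul_self_nonneg _)
  intro m
  induction m with
  | zero => exact fun _ => rfl
  | succ m ih =>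
    intro hm
    have hterm := (Finset.sum_eq_zero_iff_of_nonneg hnonneg).1 hr m (Finset.mem_range.2 hm)
    have hstep := mul_self_eq_zero.1 ((mul_eq_zero.1 hterm).resolve_left (hc m hm).ne')
    rw [sub_eq_zero.1 hstep, ih (by omega)]

lemma sum_mul_sq_lt_sum_mul_sq_of_succ_sub_eq_neg_abs {f : ℕ → ℝ} (hp : ∀ m ≤ N, 0 < p m)
    (hr : ∑ m ∈ Finset.range (N + 1), p m * r m = 0)
    (hf : ∑ m ∈ Finset.range (N + 1), p m * f m = 0)
    (hfr : ∀ m, f (m + 1) - f m = -|r (m + 1) - r m|) {k l : ℕ} (hk : k < N) (hl : l < N)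
    (hdecr : r (k + 1) < r k) (hincr : r l < r (l + 1)) :
    ∑ m ∈ Finset.range (N + 1), p m * r m ^ 2 < ∑ m ∈ Finset.range (N + 1), p m * f m ^ 2 := by
  have hsub : Antitone fun m => f m - r m := antitone_nat_of_succ_le fun m => by
    linarith [hfr m, neg_abs_le (r (m + 1) - r m)]
  have hadd : Antitone fun m => f m + r m := antitone_nat_of_succ_le fun m => by
    linarith [hfr m, le_abs_self (r (m + 1) - r m)]
  have hsub_lt : f N - r N < f 0 - r 0 := calc
    f N - r N ≤ f (l + 1) - r (l + 1) := hsub hl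
    _ < f l - r l := by linarith [hfr l, abs_of_pos (sub_pos.2 hincr)]
    _ ≤ f 0 - r 0 := hsub l.zero_le
  have hadd_lt : f N + r N < f 0 + r 0 := calc
    f N + r N ≤ f (k + 1) + r (k + 1) := hadd hk
    _ < f k + r k := by linarith [hfr k, abs_of_neg (sub_neg.2 hdecr)]
    _ ≤ f 0 + r 0 := hadd k.zero_le
  have hp' : ∀ m ∈ Finset.range (N + 1), 0 < p m := fun m hm =>
    hp m (Finset.mem_range_succ_iff.1 hm)
  have chebyshev := sum_mul_sum_mul_lt_of_monovaryOn hp' ((hsub.monovary hadd).monovaryOn _)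
    (i := N) (j := 0) (by simp) (by simp) hsub_lt hadd_lt
  have hcentered : ∑ m ∈ Finset.range (N + 1), p m * (f m - r m) = 0 := by
    simp only [mul_sub, Finset.sum_sub_distrib, hf, hr, sub_zero]
  have hprod : ∑ m ∈ Finset.range (N + 1), p m * ((f m - r m) * (f m + r m)) =
      ∑ m ∈ Finset.range (N + 1), p m * f m ^ 2 - ∑ m ∈ Finset.range (N + 1), p m * r m ^ 2 := by
    rw [← Finset.sum_sub_distrib]
    exact Finset.sum_congr rfl fun m _ => by ring
  rw [hcentered, zero_mul, hprod] at chebyshev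
  exact sub_pos.1 (pos_of_mul_pos_right chebyshev (Finset.sum_nonneg fun m hm => (hp' m hm).le))

lemma mul_succ_sub_eq_neg_mul_sum (heigen : IsWeakEigenfunction N p c μ r) {m : ℕ} (hm : m < N) :
    c m * (r (m + 1) - r m) = -(μ * ∑ i ∈ Finset.range (m + 1), p i * r i) := by
  let g : ℕ → ℝ := fun i => if i ∈ Finset.range (m + 1) then 1 else 0
  have hg (i : ℕ) : g (i + 1) - g i = if i = m then -1 else 0 := by
    simp only [g, Finset.mem_range]
    split_ifs <;> first | omega | norm_num
  have henergy : dirichletForm N c g r = -(c m * (r (m + 1) - r m)) := by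
    simp only [dirichletForm, hg, ite_mul, mul_ite, zero_mul, mul_zero]
    rw [Finset.sum_ite_eq', if_pos (Finset.mem_range.2 hm), neg_one_mul, mul_neg]
  have hsum : ∑ i ∈ Finset.range (N + 1), p i * (g i * r i) =
      ∑ i ∈ Finset.range (m + 1), p i * r i := by
    simp only [g, ite_mul, mul_ite, one_mul, zero_mul, mul_zero]
    rw [Finset.sum_ite_mem, Finset.inter_eq_right.2 (Finset.range_subset_range.2 (by omega))]
  rw [← hsum, ← heigen g, henergy, neg_neg]

lemma sum_mul_eq_zero_of_isWeakEigenfunction (hμ : μ ≠ 0) (heigen : IsWeakEigenfunction N p c μ r) :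
    ∑ m ∈ Finset.range (N + 1), p m * r m = 0 := by
  have htest := heigen fun _ => 1
  simp only [dirichletForm, sub_self, zero_mul, mul_zero, Finset.sum_const_zero, one_mul] at htest
  exact (mul_eq_zero.1 htest.symm).resolve_left hμ

lemma succ_le_of_hasSpectralGap (hp : ∀ m ≤ N, 0 < p m) (hμ : 0 < μ)
    (heigen : IsWeakEigenfunction N p c μ r) (hgap : HasSpectralGap N p c μ)
    {k : ℕ} (hk : k < N) (hdecr : r (k + 1) < r k) {m : ℕ} (hm : m < N) : r (m + 1) ≤ r m := by
  by_contra! hincr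
  set P := ∑ m ∈ Finset.range (N + 1), p m
  set M := ∑ m ∈ Finset.range (N + 1), p m * monotoneUnfolding r m with hM
  have hP : P ≠ 0 :=
    (Finset.sum_pos (fun i hi => hp i (Finset.mem_range_succ_iff.1 hi)) ⟨0, by simp⟩).ne'
  let f : ℕ → ℝ := fun i => monotoneUnfolding r i - M / P
  have hf : ∑ m ∈ Finset.range (N + 1), p m * f m = 0 := by
    simp only [f, mul_sub, Finset.sum_sub_distrib, ← Finset.sum_mul, ← hM]
    rw [mul_div_cancel₀ M hP, sub_self]
  have hfr (i : ℕ) : f (i + 1) - f i = -|r (i + 1) - r i| := by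
    rw [← monotoneUnfolding_succ_sub, sub_sub_sub_cancel_right]
  have henergy : dirichletForm N c f f = dirichletForm N c r r := by
    simp only [dirichletForm, hfr, neg_mul_neg, abs_mul_abs_self]
  have hvariance := sum_mul_sq_lt_sum_mul_sq_of_succ_sub_eq_neg_abs hp
    (sum_mul_eq_zero_of_isWeakEigenfunction hμ.ne' heigen) hf hfr hk hm hdecr hincr
  refine (mul_lt_mul_of_pos_left hvariance hμ).not_ge ((hgap f hf).trans_eq ?_)
  simp only [henergy, heigen r, sq]

lemma succ_lt_iff_sum_mul_pos (hμ : 0 < μ) (heigen : IsWeakEigenfunction N p c μ r) {m : ℕ}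
    (hm : m < N) (hcm : 0 < c m) : r (m + 1) < r m ↔ 0 < ∑ i ∈ Finset.range (m + 1), p i * r i := by
  have hsign := smul_neg_iff_of_pos_left hcm (b := r (m + 1) - r m)
  rw [smul_eq_mul, mul_succ_sub_eq_neg_mul_sum heigen hm, neg_lt_zero, mul_pos_iff_of_pos_left hμ,
    sub_neg] at hsign
  exact hsign.symm

lemma sum_mul_nonneg_of_hasSpectralGap (hp : ∀ m ≤ N, 0 < p m) (hc : ∀ m < N, 0 < c m) (hμ : 0 < μ)
    (heigen : IsWeakEigenfunction N p c μ r) (hgap : HasSpectralGap N p c μ) (hr0 : 0 < r 0)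
    {m : ℕ} (hm : m ≤ N) : 0 ≤ ∑ i ∈ Finset.range (m + 1), p i * r i := by
  rcases hm.eq_or_lt with rfl | hlt
  · exact (sum_mul_eq_zero_of_isWeakEigenfunction hμ.ne' heigen).ge
  · have hN : 0 < N := by omega
    have hdecr : r 1 < r 0 := (succ_lt_iff_sum_mul_pos hμ heigen hN (hc 0 hN)).2 <| by
      simpa using mul_pos (hp 0 N.zero_le) hr0
    have hle : r (m + 1) ≤ r m := succ_le_of_hasSpectralGap hp hμ heigen hgap hN hdecr hlt
    have hflux := mul_nonpos_of_nonneg_of_nonpos (hc m hlt).le (sub_nonpos.2 hle)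
    rw [mul_succ_sub_eq_neg_mul_sum heigen hlt, neg_nonpos] at hflux
    exact nonneg_of_mul_nonneg_right hflux hμ

theorem strictAntiOn_of_hasSpectralGap (hp : ∀ m ≤ N, 0 < p m) (hc : ∀ m < N, 0 < c m) (hμ : 0 < μ)
    (heigen : IsWeakEigenfunction N p c μ r) (hgap : HasSpectralGap N p c μ) (hr0 : 0 < r 0) :
    StrictAntiOn r (Set.Iic N) := by
  let S : ℕ → ℝ := fun m => ∑ i ∈ Finset.range (m + 1), p i * r i
  have hS (m : ℕ) : S (m + 1) = S m + p (m + 1) * r (m + 1) := Finset.sum_range_succ _ _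
  have S_nonneg {m : ℕ} (hm : m ≤ N) : 0 ≤ S m :=
    sum_mul_nonneg_of_hasSpectralGap hp hc hμ heigen hgap hr0 hm
  have S_pos : ∀ m < N, 0 < S m := by
    intro m
    induction m with
    | zero => exact fun _ => by simpa [S] using mul_pos (hp 0 N.zero_le) hr0
    | succ m ih =>
      intro hm
      refine (S_nonneg hm.le).lt_of_ne' fun hzero => ?_
      have hneg : p (m + 1) * r (m + 1) < 0 := by linarith [hS m, ih (by omega)]
      have hr_neg : r (m + 1) < 0 := (pos_iff_neg_of_mul_neg hneg).1 (hp (m + 1) hm.le)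
      have hr_eq : r (m + 2) = r (m + 1) := by
        have hflux : c (m + 1) * (r (m + 2) - r (m + 1)) = -(μ * S (m + 1)) :=
          mul_succ_sub_eq_neg_mul_sum heigen hm
        rw [hzero, mul_zero, neg_zero] at hflux
        exact sub_eq_zero.1 ((mul_eq_zero.1 hflux).resolve_left (hc (m + 1) hm).ne')
      have : S (m + 2) < 0 := by
        rw [hS, hzero, zero_add, hr_eq]
        exact mul_neg_of_pos_of_neg (hp (m + 2) hm) hr_neg
      exact this.not_ge (S_nonneg hm)
  exact strictAntiOn_of_add_one_lt Set.ordConnected_Iic fun m _ _ hm =>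
    (succ_lt_iff_sum_mul_pos hμ heigen hm (hc m hm)).2 (S_pos m hm)

end WeightedPath

section SymmetricMatrix

open Matrix

variable {n : Type*} [Fintype n]

lemma two_mul_dotProduct_mulVec_of_isSymm {R : Type*} [CommRing R] {A : Matrix n n R}
    (hA : A.IsSymm) {v : n → R} {l : R} (hv : A *ᵥ v = l • v) (f g : n → R) :
    2 * ((fun i => f i * v i) ⬝ᵥ A *ᵥ fun i => g i * v i) =
      2 * (l * ∑ i, v i ^ 2 * (f i * g i)) -
        ∑ i, ∑ j, A i j * (v i * v j * ((f j - f i) * (g j - g i))) := by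
  have swap (F : n → n → R) : ∑ i, ∑ j, A i j * F j i = ∑ i, ∑ j, A i j * F i j := by
    rw [Finset.sum_comm]
    simp only [hA.apply]
  have cross : (fun i => f i * v i) ⬝ᵥ A *ᵥ (fun i => g i * v i) =
      ∑ i, ∑ j, A i j * (v i * v j * (f i * g j)) := by
    simp only [dotProduct, mulVec, Finset.mul_sum]
    refine Finset.sum_congr rfl fun i _ => Finset.sum_congr rfl fun j _ => ?_
    ring
  have diag : ∑ i, ∑ j, A i j * (v i * v j * (f i * g i)) = l * ∑ i, v i ^ 2 * (f i * g i) := by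
    rw [Finset.mul_sum]
    refine Finset.sum_congr rfl fun i _ => ?_
    have hvi : ∑ j, A i j * v j = l * v i := congrFun hv i
    calc ∑ j, A i j * (v i * v j * (f i * g i))
      _ = (∑ j, A i j * v j) * (v i * (f i * g i)) := by
        rw [Finset.sum_mul]
        exact Finset.sum_congr rfl fun j _ => by ring
      _ = l * (v i ^ 2 * (f i * g i)) := by rw [hvi]; ring
  have expand (i j : n) : A i j * (v i * v j * ((f j - f i) * (g j - g i))) =
      A i j * (v j * v i * (f j * g j)) + A i j * (v i * v j * (f i * g i)) -
        A i j * (v j * v i * (f j * g i)) - A i j * (v i * v j * (f i * g j)) := by ring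
  simp only [expand, Finset.sum_sub_distrib, Finset.sum_add_distrib,
    swap fun i j => v i * v j * (f i * g i), swap fun i j => v i * v j * (f i * g j), diag, cross]
  ring

lemma mul_dotProduct_self_le_of_orthogonal_eigenvectors {A : Matrix n n ℝ}
    (hA : A.IsHermitian) {l : ℝ} {u : n → ℝ}
    (hu : ∀ μ < l, ∀ e, A *ᵥ e = μ • e → e ⬝ᵥ u = 0) : l * (u ⬝ᵥ u) ≤ u ⬝ᵥ A *ᵥ u := by
  let b (i : n) : n → ℝ := (hA.eigenvectorBasis i).ofLp
  have hb (i : n) : A *ᵥ b i = hA.eigenvalues i • b i := hA.mulVec_eigenvectorBasis i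
  have parseval (x : n → ℝ) : u ⬝ᵥ x = ∑ i, (b i ⬝ᵥ u) * (b i ⬝ᵥ x) := by
    have := hA.eigenvectorBasis.sum_inner_mul_inner (WithLp.toLp 2 u) (WithLp.toLp 2 x)
    simpa [EuclideanSpace.inner_eq_star_dotProduct, dotProduct_comm, b] using this.symm
  have hbA (i : n) : b i ⬝ᵥ A *ᵥ u = hA.eigenvalues i * (b i ⬝ᵥ u) := by
    rw [dotProduct_mulVec, ← mulVec_transpose, ← conjTranspose_eq_transpose_of_trivial, hA.eq, hb,
      smul_dotProduct, smul_eq_mul]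
  rw [parseval u, parseval (A *ᵥ u), Finset.mul_sum]
  refine Finset.sum_le_sum fun i _ => ?_
  rcases lt_or_ge (hA.eigenvalues i) l with hlt | hle
  · simp only [hu _ hlt (b i) (hb i), zero_mul, mul_zero, le_refl]
  · rw [hbA, mul_left_comm (b i ⬝ᵥ u)]
    exact mul_le_mul_of_nonneg_right hle (mul_self_nonneg _)

end SymmetricMatrix

section JacobiMatrix

open Matrix

/-- The symmetric tridiagonal (Jacobi) matrix of order `N + 1` with diagonal `d 0, …, d N` and
off-diagonal `-a 0, …, -a (N - 1)`; further values of `d` and `a` are ignored. The minus sign makes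
positive `a` correspond to a positive ground state. -/
noncomputable def jacobiMatrix (N : ℕ) (d a : ℕ → ℝ) : Matrix (Fin (N + 1)) (Fin (N + 1)) ℝ :=
  of fun i j =>
    if i = j then d i else if (i : ℕ) + 1 = j then -a i else if (j : ℕ) + 1 = i then -a j else 0

variable {N : ℕ} {d a v : ℕ → ℝ} {l l1 l2 : ℝ}

lemma jacobiMatrix_isSymm : (jacobiMatrix N d a).IsSymm := by
  ext i j
  simp only [jacobiMatrix, transpose_apply, of_apply]
  split_ifs <;> first | omega | simp_all

lemma sum_jacobiMatrix_mul (F : ℕ → ℕ → ℝ) :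
    ∑ i : Fin (N + 1), ∑ j : Fin (N + 1), jacobiMatrix N d a i j * F i j =
      ∑ m ∈ Finset.range (N + 1), d m * F m m -
        ∑ m ∈ Finset.range N, a m * (F m (m + 1) + F (m + 1) m) := by
  have entry (i j : Fin (N + 1)) : jacobiMatrix N d a i j * F i j =
      (if (i : ℕ) = j then d i * F i i else 0) -
        (if (i : ℕ) + 1 = j then a i * F i (i + 1) else 0) -
          if (j : ℕ) + 1 = i then a j * F (j + 1) j else 0 := by
    simp only [jacobiMatrix, of_apply, Fin.ext_iff]
    split_ifs <;> first | omega | simp [*]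
  have offDiag (G : ℕ → ℝ) :
      (∑ i ∈ Finset.range (N + 1), ∑ j ∈ Finset.range (N + 1), if i + 1 = j then G i else 0) =
        ∑ m ∈ Finset.range N, G m := by
    simp only [Finset.sum_ite_eq, Finset.mem_range, add_lt_add_iff_right]
    rw [Finset.sum_range_succ, if_neg (lt_irrefl N), add_zero]
    exact Finset.sum_congr rfl fun m hm => if_pos (Finset.mem_range.1 hm)
  have subDiag (G : ℕ → ℝ) :
      (∑ i ∈ Finset.range (N + 1), ∑ j ∈ Finset.range (N + 1), if j + 1 = i then G j else 0) =
        ∑ m ∈ Finset.range N, G m := by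
    rw [Finset.sum_comm, offDiag]
  calc
    _ = ∑ i ∈ Finset.range (N + 1), ∑ j ∈ Finset.range (N + 1),
          ((if i = j then d i * F i i else 0) - (if i + 1 = j then a i * F i (i + 1) else 0) -
            if j + 1 = i then a j * F (j + 1) j else 0) := by
      simp only [entry, Finset.sum_range]
    _ = ∑ m ∈ Finset.range (N + 1), d m * F m m - ∑ m ∈ Finset.range N, a m * F m (m + 1) -
          ∑ m ∈ Finset.range N, a m * F (m + 1) m := by
      simp only [Finset.sum_sub_distrib, offDiag fun m => a m * F m (m + 1),
        subDiag fun m => a m * F (m + 1) m]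
      simp +contextual
    _ = _ := by
      simp only [mul_add, Finset.sum_add_distrib]
      ring

lemma dotProduct_jacobiMatrix_mulVec
    (hv : jacobiMatrix N d a *ᵥ (fun i => v i) = l • fun i : Fin (N + 1) => v i) (f g : ℕ → ℝ) :
    (fun i : Fin (N + 1) => f i * v i) ⬝ᵥ jacobiMatrix N d a *ᵥ (fun i => g i * v i) =
      l * ∑ m ∈ Finset.range (N + 1), v m ^ 2 * (f m * g m) +
        dirichletForm N (fun m => a m * (v m * v (m + 1))) f g := by
  have h := two_mul_dotProduct_mulVec_of_isSymm jacobiMatrix_isSymm hv (fun i => f i) fun i => g i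
  have henergy : ∑ m ∈ Finset.range N, a m * (v m * v (m + 1) *
        ((f (m + 1) - f m) * (g (m + 1) - g m)) +
      v (m + 1) * v m * ((f m - f (m + 1)) * (g m - g (m + 1)))) =
      2 * dirichletForm N (fun m => a m * (v m * v (m + 1))) f g := by
    rw [dirichletForm, Finset.mul_sum]
    exact Finset.sum_congr rfl fun m _ => by ring
  rw [sum_jacobiMatrix_mul fun i j => v i * v j * ((f j - f i) * (g j - g i)), henergy,
    Fin.sum_univ_eq_sum_range fun m => v m ^ 2 * (f m * g m)] at h
  simp only [sub_self, mul_zero, Finset.sum_const_zero] at h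
  linarith

lemma isWeakEigenfunction_of_eigenvector {r : ℕ → ℝ}
    (hv : jacobiMatrix N d a *ᵥ (fun i => v i) = l1 • fun i : Fin (N + 1) => v i)
    (hr : jacobiMatrix N d a *ᵥ (fun i => r i * v i) = l2 • fun i : Fin (N + 1) => r i * v i) :
    IsWeakEigenfunction N (fun m => v m ^ 2) (fun m => a m * (v m * v (m + 1))) (l2 - l1) r := by
  intro g
  have h := dotProduct_jacobiMatrix_mulVec hv g r
  have hdot : (fun i : Fin (N + 1) => g i * v i) ⬝ᵥ (fun i => r i * v i) =
      ∑ m ∈ Finset.range (N + 1), v m ^ 2 * (g m * r m) := by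
    rw [← Fin.sum_univ_eq_sum_range fun m => v m ^ 2 * (g m * r m), dotProduct]
    exact Finset.sum_congr rfl fun i _ => by ring
  rw [hr, dotProduct_smul, hdot, smul_eq_mul] at h
  linarith

lemma eigenvector_eq_smul_of_pos (ha : ∀ m < N, 0 < a m) (hpos : ∀ m ≤ N, 0 < v m)
    (hv : jacobiMatrix N d a *ᵥ (fun i => v i) = l • fun i : Fin (N + 1) => v i)
    {e : Fin (N + 1) → ℝ} (he : jacobiMatrix N d a *ᵥ e = l • e) :
    ∃ t : ℝ, e = t • fun i : Fin (N + 1) => v i := by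
  let r : ℕ → ℝ := fun m => e (Fin.ofNat (N + 1) m) / v m
  have hre : e = fun i : Fin (N + 1) => r i * v i := by
    ext i
    rw [div_mul_cancel₀ _ (hpos i (Nat.lt_succ_iff.1 i.2)).ne', Fin.ofNat_val_eq_self]
  have henergy : dirichletForm N (fun m => a m * (v m * v (m + 1))) r r = 0 := by
    rw [isWeakEigenfunction_of_eigenvector hv (hre ▸ he) r, sub_self, zero_mul]
  have hconst := eq_apply_zero_of_dirichletForm_self_eq_zero
    (fun m hm => mul_pos (ha m hm) (mul_pos (hpos m hm.le) (hpos (m + 1) hm))) henergy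
  refine ⟨r 0, hre.trans (funext fun i => ?_)⟩
  rw [hconst i (Nat.lt_succ_iff.1 i.2), Pi.smul_apply, smul_eq_mul]

lemma hasSpectralGap_of_twoSmallest (ha : ∀ m < N, 0 < a m)
    (h : TwoSmallest (jacobiMatrix N d a) l1 l2) (hpos : ∀ m ≤ N, 0 < v m)
    (hv : jacobiMatrix N d a *ᵥ (fun i => v i) = l1 • fun i : Fin (N + 1) => v i) :
    HasSpectralGap N (fun m => v m ^ 2) (fun m => a m * (v m * v (m + 1))) (l2 - l1) := by
  intro f hf
  let u : Fin (N + 1) → ℝ := fun i => f i * v i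
  have hvu : (fun i : Fin (N + 1) => v i) ⬝ᵥ u = 0 := by
    rw [← hf, ← Fin.sum_univ_eq_sum_range fun m => v m ^ 2 * f m, dotProduct]
    exact Finset.sum_congr rfl fun i _ => by ring
  have huu : u ⬝ᵥ u = ∑ m ∈ Finset.range (N + 1), v m ^ 2 * f m ^ 2 := by
    rw [← Fin.sum_univ_eq_sum_range fun m => v m ^ 2 * f m ^ 2, dotProduct]
    exact Finset.sum_congr rfl fun i _ => by ring
  have orthogonal : ∀ μ < l2, ∀ e, jacobiMatrix N d a *ᵥ e = μ • e → e ⬝ᵥ u = 0 := by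
    intro μ hμ e he
    rcases eq_or_ne e 0 with rfl | hne
    · exact zero_dotProduct u
    · have hμ1 : μ = l1 := by
        by_contra hne1
        exact hμ.not_ge ((h.2.2.2 μ ⟨e, hne, he⟩).2 hne1)
      obtain ⟨t, rfl⟩ := eigenvector_eq_smul_of_pos ha hpos hv (hμ1 ▸ he)
      rw [smul_dotProduct, hvu, smul_zero]
  have hrayleigh := mul_dotProduct_self_le_of_orthogonal_eigenvectors
    ((conjTranspose_eq_transpose_of_trivial _).trans jacobiMatrix_isSymm) orthogonal
  rw [dotProduct_jacobiMatrix_mulVec hv, huu] at hrayleigh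
  simp only [← sq] at hrayleigh
  linarith

theorem strictAntiOn_eigenvector_ratio {v1 v2 : ℕ → ℝ} (ha : ∀ m < N, 0 < a m)
    (h : TwoSmallest (jacobiMatrix N d a) l1 l2)
    (hv1 : jacobiMatrix N d a *ᵥ (fun i => v1 i) = l1 • fun i : Fin (N + 1) => v1 i)
    (hv2 : jacobiMatrix N d a *ᵥ (fun i => v2 i) = l2 • fun i : Fin (N + 1) => v2 i)
    (hpos : ∀ m ≤ N, 0 < v1 m) (hv20 : 0 < v2 0) :
    StrictAntiOn (fun m => v2 m / v1 m) (Set.Iic N) := by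
  have hratio : (fun i : Fin (N + 1) => v2 i) = fun i : Fin (N + 1) => v2 i / v1 i * v1 i :=
    funext fun i => (div_mul_cancel₀ _ (hpos i (Nat.lt_succ_iff.1 i.2)).ne').symm
  exact strictAntiOn_of_hasSpectralGap (fun m hm => pow_pos (hpos m hm) 2)
    (fun m hm => mul_pos (ha m hm) (mul_pos (hpos m hm.le) (hpos (m + 1) hm)))
    (sub_pos.2 h.2.2.1) (isWeakEigenfunction_of_eigenvector hv1 (hratio ▸ hv2))
    (hasSpectralGap_of_twoSmallest ha h hpos hv1)
    (div_pos hv20 (hpos 0 N.zero_le))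

theorem hypercube_ratio_decreasing_general {v1 v2 : ℕ → ℝ} (ha : ∀ m < N, 0 < a m)
    (h : TwoSmallest (jacobiMatrix N d a) l1 l2)
    (hv1 : jacobiMatrix N d a *ᵥ (fun i => v1 i) = l1 • fun i : Fin (N + 1) => v1 i)
    (hv2 : jacobiMatrix N d a *ᵥ (fun i => v2 i) = l2 • fun i : Fin (N + 1) => v2 i)
    (hnorm : ∑ m ∈ Finset.range (N + 1), v1 m ^ 2 = ∑ m ∈ Finset.range (N + 1), v2 m ^ 2)
    (hpos : ∀ m ≤ N, 0 < v1 m) (hv20 : 0 < v2 0) :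
    (∀ m < N, v2 (m + 1) / v1 (m + 1) < v2 m / v1 m) ∧
      (generalizedZeros N fun m => v2 m ^ 2 - v1 m ^ 2).card ≤ 2 ∧
      (generalizedZeros N fun m => v2 m ^ 2 - v1 m ^ 2).Nonempty := by
  have hratio := strictAntiOn_eigenvector_ratio ha h hv1 hv2 hpos hv20
  refine ⟨fun m hm => hratio hm.le hm m.lt_succ_self,
    card_generalizedZeros_sq_sub_sq_le_two hpos hratio,
    generalizedZeros_nonempty_of_sum_eq_zero ?_⟩
  rw [Finset.sum_sub_distrib, hnorm, sub_self]

lemma hypJ_eq_jacobiMatrix (N : ℕ) (w : ℕ → ℝ) :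
    hypJ N w = jacobiMatrix N (fun m => N + w m) fun m => √((m + 1) * (N - m)) :=
  rfl

lemma sqrt_succ_mul_sub_pos {m : ℕ} (hm : m < N) : 0 < √((m + 1) * (N - m) : ℝ) :=
  Real.sqrt_pos.2 (mul_pos m.cast_add_one_pos (sub_pos.2 (Nat.cast_lt.2 hm)))

end JacobiMatrix

/-- for the two smallest eigenvalues `l1 < l2` of `J_w`, with `v1`
componentwise positive and `v2 0 > 0`, the sequence `v2 m / v1 m` is strictly
decreasing on `{0,…,N}`; consequently the sequence `v2 m ^ 2 - v1 m ^ 2` has at most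
two generalized zeros and at least one. -/
theorem hypercube_ratio_decreasing (N : ℕ) (hN : 1 ≤ N) (w : ℕ → ℝ)
    (l1 l2 : ℝ) (h : TwoSmallest (hypJ N w) l1 l2)
    (v1 v2 : ℕ → ℝ)
    (hv1e : (hypJ N w).mulVec (fun i : Fin (N + 1) => v1 (i : ℕ)) =
      l1 • fun i : Fin (N + 1) => v1 (i : ℕ))
    (hv1n : ∑ m ∈ Finset.range (N + 1), v1 m ^ 2 = 1)
    (hv2e : (hypJ N w).mulVec (fun i : Fin (N + 1) => v2 (i : ℕ)) =
      l2 • fun i : Fin (N + 1) => v2 (i : ℕ))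
    (hv2n : ∑ m ∈ Finset.range (N + 1), v2 m ^ 2 = 1)
    (hv1pos : ∀ m : ℕ, m ≤ N → 0 < v1 m)
    (hv20 : 0 < v2 0) :
    (∀ m : ℕ, m < N → v2 (m + 1) / v1 (m + 1) < v2 m / v1 m) ∧
    ((Finset.range (N + 1)).filter (fun m =>
        v2 m ^ 2 - v1 m ^ 2 = 0 ∨
        (m < N ∧ (v2 m ^ 2 - v1 m ^ 2) * (v2 (m + 1) ^ 2 - v1 (m + 1) ^ 2) < 0))).card
      ≤ 2 ∧
    ((Finset.range (N + 1)).filter (fun m =>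
        v2 m ^ 2 - v1 m ^ 2 = 0 ∨
        (m < N ∧ (v2 m ^ 2 - v1 m ^ 2) * (v2 (m + 1) ^ 2 - v1 (m + 1) ^ 2) < 0))).Nonempty := by
  rw [hypJ_eq_jacobiMatrix] at h hv1e hv2e
  exact hypercube_ratio_decreasing_general (fun _ => sqrt_succ_mul_sub_pos) h hv1e hv2e
    (hv1n.trans hv2n.symm) hv1pos hv20
end

section
/- For every integer N ≥ 2 and every linear potential L : {1,…,N} → ℝ (L_i = a·i + b for some a, b ∈ ℝ), the fundamental gap satisfies Γ(H_L(P_N)) ≥ 2(1 − cos(π/N)), with equality when a = 0. -/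
/-- The path Schrödinger operator `H_W(P_N)`; vertex `i : Fin N` has label `i + 1`. -/
noncomputable def pathH (N : ℕ) (W : ℕ → ℝ) : Matrix (Fin N) (Fin N) ℝ :=
  Matrix.of fun i j =>
    if i = j then
      (if (i : ℕ) = 0 ∨ (i : ℕ) = N - 1 then (1 : ℝ) else 2) + W ((i : ℕ) + 1)
    else if (i : ℕ) + 1 = (j : ℕ) ∨ (j : ℕ) + 1 = (i : ℕ) then -1 else 0

/-!
Consider the gap of `H_L(P_N)` as a function of the slope `a ≥ 0`. It is continuous and grows
without bound, so if it were somewhere smaller than at `a = 0`, it would attain its minimum at some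
slope `a > 0`. By first-order perturbation theory, the two lowest eigenvectors `U`, `V` would there
have the same mean position. This is impossible. The ground state `U` is positive and decreasing, so
its mean position is at most the centre `(N + 1) / 2`. Since `V / U` is monotone, equality of the
mean positions first forces `V ^ 2` to dominate `U ^ 2` at both ends of the path, and a discrete
first integral of the eigenvalue equation then gives `V 1 ^ 2 < V N ^ 2`. Together with the
quasi-concavity of the positive part of `V` and a Sturm comparison of its two sides, this puts the
mean position of `V` strictly beyond the centre. Negative slopes reduce to positive ones by
reflecting the path, and for `a = 0` the eigenvectors are explicit cosines.
-/

section LowestPair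

open scoped RealInnerProductSpace

variable {E : Type*} [NormedAddCommGroup E] [InnerProductSpace ℝ E]

/-- The bottom of the spectrum of the symmetric operator `T`: `u` and `v` are unit eigenvectors for
its smallest eigenvalue `l₁`, which is simple, and for the next one, `l₂`. That nothing lies between
is encoded by the variational principle on the orthogonal complement of `u`. -/
structure IsLowestPair (T : E →L[ℝ] E) (l₁ l₂ : ℝ) (u v : E) : Prop where
  isSymmetric : (T : E →ₗ[ℝ] E).IsSymmetric
  apply_fst : T u = l₁ • u
  apply_snd : T v = l₂ • v
  norm_fst : ‖u‖ = 1
  norm_snd : ‖v‖ = 1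
  inner_eq_zero : ⟪u, v⟫ = 0
  lt : l₁ < l₂
  le_inner_of_inner_eq_zero : ∀ x, ⟪u, x⟫ = 0 → l₂ * ‖x‖ ^ 2 ≤ ⟪T x, x⟫

namespace IsLowestPair

variable {T : E →L[ℝ] E} {l₁ l₂ : ℝ} {u v : E}

theorem inner_apply_fst (h : IsLowestPair T l₁ l₂ u v) : ⟪T u, u⟫ = l₁ := by
  rw [h.apply_fst, real_inner_smul_left, real_inner_self_eq_norm_sq, h.norm_fst]; ring

theorem inner_apply_snd (h : IsLowestPair T l₁ l₂ u v) : ⟪T v, v⟫ = l₂ := by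
  rw [h.apply_snd, real_inner_smul_left, real_inner_self_eq_norm_sq, h.norm_snd]; ring

theorem neg_fst (h : IsLowestPair T l₁ l₂ u v) : IsLowestPair T l₁ l₂ (-u) v where
  __ := h
  apply_fst := by simp [h.apply_fst]
  norm_fst := by simpa using h.norm_fst
  inner_eq_zero := by simpa using h.inner_eq_zero
  le_inner_of_inner_eq_zero x hx := h.le_inner_of_inner_eq_zero x (by simpa using hx)

theorem neg_snd (h : IsLowestPair T l₁ l₂ u v) : IsLowestPair T l₁ l₂ u (-v) where
  __ := h
  apply_snd := by simp [h.apply_snd]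
  norm_snd := by simpa using h.norm_snd
  inner_eq_zero := by simpa using h.inner_eq_zero

theorem inner_sq_add_le_inner_apply (h : IsLowestPair T l₁ l₂ u v) (x : E) :
    l₁ * ⟪u, x⟫ ^ 2 + l₂ * (‖x‖ ^ 2 - ⟪u, x⟫ ^ 2) ≤ ⟪T x, x⟫ := by
  obtain ⟨w, hw⟩ : ∃ w, w = x - ⟪u, x⟫ • u := ⟨_, rfl⟩
  have hx : x = ⟪u, x⟫ • u + w := by rw [hw]; abel
  have huw : ⟪u, w⟫ = 0 := by
    rw [hw, inner_sub_right, real_inner_smul_right, real_inner_self_eq_norm_sq, h.norm_fst]; ring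
  have hTwu : ⟪T w, u⟫ = 0 := by
    rw [← ContinuousLinearMap.coe_coe, h.isSymmetric w u, ContinuousLinearMap.coe_coe,
      h.apply_fst, real_inner_smul_right,
      real_inner_comm, huw, mul_zero]
  have hnorm : ‖x‖ ^ 2 - ⟪u, x⟫ ^ 2 = ‖w‖ ^ 2 := by
    nth_rw 1 [hx]
    rw [norm_add_sq_real, norm_smul, h.norm_fst, real_inner_smul_left, huw,
      mul_one, Real.norm_eq_abs, sq_abs]; ring
  have henergy : ⟪T x, x⟫ = l₁ * ⟪u, x⟫ ^ 2 + ⟪T w, w⟫ := by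
    conv_lhs => rw [hx]
    simp only [map_add, map_smul, h.apply_fst, inner_add_left, inner_add_right,
      real_inner_smul_left, real_inner_smul_right, huw, hTwu, real_inner_self_eq_norm_sq,
      h.norm_fst]
    ring
  rw [hnorm, henergy]
  linarith [h.le_inner_of_inner_eq_zero w huw]

theorem inner_sq_le_norm_sq (h : IsLowestPair T l₁ l₂ u v) (x : E) : ⟪u, x⟫ ^ 2 ≤ ‖x‖ ^ 2 := by
  have := abs_real_inner_le_norm u x
  rw [h.norm_fst, one_mul] at this
  exact sq_le_sq' (neg_le_of_abs_le this) (le_of_abs_le this)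

theorem mul_norm_sq_le_inner_apply (h : IsLowestPair T l₁ l₂ u v) (x : E) :
    l₁ * ‖x‖ ^ 2 ≤ ⟪T x, x⟫ := by
  nlinarith [h.inner_sq_add_le_inner_apply x, h.inner_sq_le_norm_sq x, h.lt]

theorem eq_inner_smul_of_inner_apply_le (h : IsLowestPair T l₁ l₂ u v) {x : E}
    (hx : ⟪T x, x⟫ ≤ l₁ * ‖x‖ ^ 2) : x = ⟪u, x⟫ • u := by
  have hsq : ‖x‖ ^ 2 = ⟪u, x⟫ ^ 2 :=
    le_antisymm (by nlinarith [h.inner_sq_add_le_inner_apply x, h.lt]) (h.inner_sq_le_norm_sq x)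
  rw [← sub_eq_zero, ← norm_eq_zero, ← sq_eq_zero_iff, norm_sub_sq_real, real_inner_smul_right,
    real_inner_comm u x, norm_smul, h.norm_fst, mul_one, Real.norm_eq_abs, sq_abs, hsq]
  ring

/-- Ky Fan's inequality. -/
theorem add_le_inner_apply_add (h : IsLowestPair T l₁ l₂ u v) {x y : E} (hx : ‖x‖ = 1)
    (hy : ‖y‖ = 1) (hxy : ⟪x, y⟫ = 0) : l₁ + l₂ ≤ ⟪T x, x⟫ + ⟪T y, y⟫ := by
  have bessel : ⟪u, x⟫ ^ 2 + ⟪u, y⟫ ^ 2 ≤ 1 := by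
    have horth : Orthonormal ℝ ![x, y] := by
      simp [orthonormal_vecCons_iff, hx, hy, hxy]
    simpa [h.norm_fst, real_inner_comm] using horth.sum_inner_products_le u (s := Finset.univ)
  have hTx := h.inner_sq_add_le_inner_apply x
  have hTy := h.inner_sq_add_le_inner_apply y
  rw [hx] at hTx
  rw [hy] at hTy
  nlinarith [h.lt]

/-- One half of the Courant–Fischer principle. -/
theorem le_snd_of_forall_inner_eq_zero (h : IsLowestPair T l₁ l₂ u v) {m : ℝ} (e : E)
    (hm : ∀ x, ⟪e, x⟫ = 0 → m * ‖x‖ ^ 2 ≤ ⟪T x, x⟫) : m ≤ l₂ := by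
  by_cases hev : ⟪e, v⟫ = 0
  · simpa [h.norm_snd, h.inner_apply_snd] using hm v hev
  obtain ⟨p, hp⟩ : ∃ p, p = ⟪e, v⟫ := ⟨_, rfl⟩
  obtain ⟨q, hq⟩ : ∃ q, q = ⟪e, u⟫ := ⟨_, rfl⟩
  have hp_pos : 0 < p ^ 2 := by rw [hp]; positivity
  have hvu : ⟪v, u⟫ = 0 := by rw [real_inner_comm, h.inner_eq_zero]
  have hle := hm (p • u - q • v) (by
    rw [inner_sub_right, real_inner_smul_right, real_inner_smul_right, hp, hq]; ring)
  rw [← real_inner_self_eq_norm_sq] at hle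
  simp only [map_sub, map_smul, h.apply_fst, h.apply_snd, inner_sub_left, inner_sub_right,
    real_inner_smul_left, real_inner_smul_right, real_inner_self_eq_norm_sq, norm_smul,
    h.norm_fst, h.norm_snd, h.inner_eq_zero, hvu, Real.norm_eq_abs, mul_one, sq_abs] at hle
  have hle' : m * (p ^ 2 + q ^ 2) ≤ l₂ * (p ^ 2 + q ^ 2) := by nlinarith [h.lt]
  exact le_of_mul_le_mul_right hle' (by positivity)

theorem le_of_apply_eq_smul (h : IsLowestPair T l₁ l₂ u v) {μ : ℝ} {x : E} (hx : x ≠ 0)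
    (hTx : T x = μ • x) : l₁ ≤ μ ∧ (μ ≠ l₁ → l₂ ≤ μ) := by
  have hnorm : 0 < ‖x‖ ^ 2 := by positivity
  have hinner : ⟪T x, x⟫ = μ * ‖x‖ ^ 2 := by
    rw [hTx, real_inner_smul_left, real_inner_self_eq_norm_sq]
  refine ⟨le_of_mul_le_mul_right (hinner ▸ h.mul_norm_sq_le_inner_apply x) hnorm, fun hμ ↦ ?_⟩
  have hux : l₁ * ⟪u, x⟫ = μ * ⟪u, x⟫ := by
    simpa [h.apply_fst, hTx, real_inner_smul_left, real_inner_smul_right] using h.isSymmetric u x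
  have hzero : ⟪u, x⟫ = 0 := by
    by_contra hne
    exact hμ (mul_right_cancel₀ hne hux).symm
  exact le_of_mul_le_mul_right (hinner ▸ h.le_inner_of_inner_eq_zero x hzero) hnorm

section Perturbation

variable {T' : E →L[ℝ] E} {l₁' l₂' : ℝ} {u' v' : E}

theorem gap_le_gap_add_norm (h : IsLowestPair T l₁ l₂ u v) (h' : IsLowestPair T' l₁' l₂' u' v') :
    l₂' - l₁' ≤ l₂ - l₁ + 4 * ‖T' - T‖ := by
  have hD (x : E) (hx : ‖x‖ = 1) : |⟪T' x, x⟫ - ⟪T x, x⟫| ≤ ‖T' - T‖ := by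
    rw [← inner_sub_left, ← sub_apply]
    calc |⟪(T' - T) x, x⟫| ≤ ‖(T' - T) x‖ * ‖x‖ := abs_real_inner_le_norm _ _
      _ ≤ ‖T' - T‖ * ‖x‖ * ‖x‖ := by gcongr; exact (T' - T).le_opNorm x
      _ = ‖T' - T‖ := by rw [hx, mul_one, mul_one]
  have hsum := h'.add_le_inner_apply_add h.norm_fst h.norm_snd h.inner_eq_zero
  have hfst := h.mul_norm_sq_le_inner_apply u'
  rw [h'.norm_fst] at hfst
  have hu := abs_le.1 (hD u h.norm_fst)
  have hv := abs_le.1 (hD v h.norm_snd)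
  have hu' := abs_le.1 (hD u' h'.norm_fst)
  rw [h.inner_apply_fst] at hu
  rw [h.inner_apply_snd] at hv
  rw [h'.inner_apply_fst] at hu'
  linarith

theorem fst_add_inner_sub_le_fst (h : IsLowestPair T l₁ l₂ u v)
    (h' : IsLowestPair T' l₁' l₂' u' v') :
    l₁ + ⟪(T' - T) u, u⟫ - ‖T' - T‖ ^ 2 / (l₂ - l₁) ≤ l₁' := by
  obtain ⟨D, hD⟩ : ∃ D, D = T' - T := ⟨_, rfl⟩
  have hDsymm (x y : E) : ⟪D x, y⟫ = ⟪x, D y⟫ := by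
    simpa [hD, inner_sub_left, inner_sub_right] using
      congr($(h'.isSymmetric x y) - $(h.isSymmetric x y))
  have hgap : 0 < l₂ - l₁ := sub_pos.2 h.lt
  have hsplit := h.inner_sq_add_le_inner_apply u'
  have hfst : l₁' = ⟪T u', u'⟫ + ⟪D u', u'⟫ := by
    rw [← inner_add_left, ← h'.inner_apply_fst, hD]; simp
  obtain ⟨c, hc⟩ : ∃ c, c = ⟪u, u'⟫ := ⟨_, rfl⟩
  rw [h'.norm_fst, ← hc] at hsplit
  obtain ⟨s, hs⟩ : ∃ s, s = ‖u' - u‖ * ‖u' + u‖ := ⟨_, rfl⟩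
  have hs_sq : s ^ 2 = 4 * (1 - c ^ 2) := by
    rw [hs, mul_pow, norm_sub_sq_real, norm_add_sq_real, h'.norm_fst, h.norm_fst,
      real_inner_comm, ← hc]
    ring
  have hDs : |⟪D u', u'⟫ - ⟪D u, u⟫| ≤ ‖D‖ * s := by
    have hcross : ⟪D u, u'⟫ = ⟪D u', u⟫ := by rw [hDsymm, real_inner_comm]
    have hdiff : ⟪D u', u'⟫ - ⟪D u, u⟫ = ⟪D (u' - u), u' + u⟫ := by
      rw [map_sub, inner_sub_left, inner_add_right, inner_add_right, hcross]
      ring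
    rw [hdiff, hs, ← mul_assoc]
    exact (abs_real_inner_le_norm _ _).trans (by gcongr; exact D.le_opNorm _)
  have hquad : ‖D‖ * s - (l₂ - l₁) * (s ^ 2 / 4) ≤ ‖D‖ ^ 2 / (l₂ - l₁) := by
    rw [le_div_iff₀ hgap]
    nlinarith [sq_nonneg (‖D‖ - (l₂ - l₁) * s / 2)]
  rw [← hD, hfst]
  rw [hs_sq] at hquad
  linarith [neg_le_of_abs_le hDs]

theorem gap_le_gap_add_inner (h : IsLowestPair T l₁ l₂ u v) (h' : IsLowestPair T' l₁' l₂' u' v') :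
    l₂' - l₁' ≤ l₂ - l₁ + (⟪(T' - T) v, v⟫ - ⟪(T' - T) u, u⟫)
      + 2 * (‖T' - T‖ ^ 2 / (l₂ - l₁)) := by
  have hsum := h'.add_le_inner_apply_add h.norm_fst h.norm_snd h.inner_eq_zero
  have hfst := h.fst_add_inner_sub_le_fst h'
  simp only [sub_apply, inner_sub_left, h.inner_apply_fst,
    h.inner_apply_snd] at hfst ⊢
  linarith

end Perturbation

section Family

variable {S : E →L[ℝ] E} {l₁ l₂ : ℝ → ℝ} {u v : ℝ → E}

theorem continuous_gap (h : ∀ t, IsLowestPair (T + t • S) (l₁ t) (l₂ t) (u t) (v t)) :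
    Continuous fun t ↦ l₂ t - l₁ t := by
  refine (LipschitzWith.of_le_add_mul (4 * ‖S‖₊) fun s t ↦ ?_).continuous
  have hD : T + s • S - (T + t • S) = (s - t) • S := by module
  have hle := (h t).gap_le_gap_add_norm (h s)
  rw [hD, norm_smul, ← dist_eq_norm] at hle
  push_cast
  linarith

/-- The derivatives of `l₁` and `l₂` are `⟪S u, u⟫` and `⟪S v, v⟫` (Hellmann–Feynman); at a minimum
of the gap an upper bound with a quadratic error is enough to compare them. -/
theorem inner_apply_eq_of_isLocalMin_gap
    (h : ∀ t, IsLowestPair (T + t • S) (l₁ t) (l₂ t) (u t) (v t)) {t₀ : ℝ}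
    (hmin : IsLocalMin (fun t ↦ l₂ t - l₁ t) t₀) :
    ⟪S (u t₀), u t₀⟫ = ⟪S (v t₀), v t₀⟫ := by
  obtain ⟨d, hd⟩ : ∃ d, d = ⟪S (v t₀), v t₀⟫ - ⟪S (u t₀), u t₀⟫ := ⟨_, rfl⟩
  obtain ⟨C, hC⟩ : ∃ C, C = 2 * (‖S‖ ^ 2 / (l₂ t₀ - l₁ t₀)) := ⟨_, rfl⟩
  have hupper (t : ℝ) : l₂ t - l₁ t ≤ l₂ t₀ - l₁ t₀ + ((t - t₀) * d + C * (t - t₀) ^ 2) := by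
    have hD : T + t • S - (T + t₀ • S) = (t - t₀) • S := by module
    have hle := (h t₀).gap_le_gap_add_inner (h t)
    rw [hD, norm_smul, mul_pow, Real.norm_eq_abs, sq_abs, smul_apply,
      smul_apply, real_inner_smul_left, real_inner_smul_left] at hle
    refine hle.trans_eq ?_
    rw [hd, hC]
    ring
  have hmin' : IsLocalMin (fun t ↦ (t - t₀) * d + C * (t - t₀) ^ 2) t₀ := by
    filter_upwards [hmin] with t ht
    simp only [sub_self]
    linarith [hupper t]
  have hderiv : HasDerivAt (fun t ↦ (t - t₀) * d + C * (t - t₀) ^ 2) d t₀ := by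
    have hlin := (hasDerivAt_id t₀).sub_const t₀
    simpa using (hlin.mul_const d).fun_add ((hlin.pow 2).const_mul C)
  linarith [hmin'.hasDerivAt_eq_zero hderiv]

end Family

end IsLowestPair

theorem exists_isLowestPair [FiniteDimensional ℝ E] {T : E →L[ℝ] E}
    (hT : (T : E →ₗ[ℝ] E).IsSymmetric) (hE : 2 ≤ Module.finrank ℝ E)
    (hsimple : ∀ (μ : ℝ) (x y : E), T x = μ • x → T y = μ • y → ⟪x, y⟫ = 0 → x = 0 ∨ y = 0) :
    ∃ l₁ l₂ u v, IsLowestPair T l₁ l₂ u v := by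
  obtain ⟨n, hn⟩ := Nat.exists_eq_add_of_le' hE
  let e := hT.eigenvectorBasis hn
  let l : Fin (n + 2) → ℝ := hT.eigenvalues hn
  have hTe (i : Fin (n + 2)) : T (e i) = l i • e i :=
    hT.apply_eigenvectorBasis hn i
  have hl : Antitone l := hT.eigenvalues_antitone hn
  let i₁ := Fin.last (n + 1)
  let i₂ := (Fin.last n).castSucc
  have hi : i₂ ≠ i₁ := (Fin.castSucc_lt_last _).ne
  have hine : ⟪e i₁, e i₂⟫ = 0 := e.orthonormal.2 hi.symm
  refine ⟨l i₁, l i₂, e i₁, e i₂, hT, hTe _, hTe _, e.orthonormal.1 _, e.orthonormal.1 _, hine,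
    (hl (Fin.le_last _)).lt_of_ne fun heq ↦ ?_, fun x hx ↦ ?_⟩
  · rcases hsimple (l i₁) (e i₁) (e i₂) (hTe _) (by rw [hTe, heq]) hine with h0 | h0
    · exact e.orthonormal.ne_zero _ h0
    · exact e.orthonormal.ne_zero _ h0
  · have hTx : ⟪T x, x⟫ = ∑ i, l i * ⟪e i, x⟫ ^ 2 := by
      rw [← e.sum_inner_mul_inner]
      refine Finset.sum_congr rfl fun i _ ↦ ?_
      have hi' : ⟪T x, e i⟫ = l i * ⟪e i, x⟫ := by
        rw [← real_inner_smul_left, ← hTe, real_inner_comm]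
        exact (hT (e i) x).symm
      rw [hi']
      ring
    have hx' : ‖x‖ ^ 2 = ∑ i, ⟪e i, x⟫ ^ 2 := by
      simpa using (e.sum_sq_norm_inner_right x).symm
    rw [hTx, hx', Finset.mul_sum]
    refine Finset.sum_le_sum fun i _ ↦ ?_
    induction i using Fin.lastCases with
    | last => rw [hx]; simp
    | cast j =>
      have : l i₂ ≤ l j.castSucc := hl (Fin.castSucc_le_castSucc_iff.2 (Fin.le_last j))
      gcongr

end LowestPair

section Path

open Finset
open scoped RealInnerProductSpace

variable {N : ℕ} {W U V : ℕ → ℝ} {l : ℝ}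

/-- The restriction to the labels `1, …, N` of a sequence indexed by all of `ℕ`. -/
def pathVec (N : ℕ) (U : ℕ → ℝ) : EuclideanSpace ℝ (Fin N) :=
  WithLp.toLp 2 fun i ↦ U (i + 1)

/-- Neumann boundary conditions: `U` is constant across both ends of the path `1, …, N`, which it
overshoots by the two ghost vertices `0` and `N + 1`. -/
structure IsNeumann (N : ℕ) (U : ℕ → ℝ) : Prop where
  left : U 0 = U 1
  right : U (N + 1) = U N

theorem IsNeumann.comp₂ (f : ℝ → ℝ → ℝ) (hU : IsNeumann N U) (hV : IsNeumann N V) :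
    IsNeumann N fun k ↦ f (U k) (V k) :=
  ⟨by rw [hU.left, hV.left], by rw [hU.right, hV.right]⟩

theorem exists_isNeumann_pathVec_eq (hN : N ≠ 0) (x : EuclideanSpace ℝ (Fin N)) :
    ∃ U, IsNeumann N U ∧ pathVec N U = x := by
  refine ⟨fun k ↦ x ⟨min (k - 1) (N - 1), by omega⟩, ⟨rfl, by simp⟩, ?_⟩
  ext i
  exact congrArg x (Fin.ext (by grind))

theorem sum_fin_add_one (N : ℕ) (f : ℕ → ℝ) : ∑ i : Fin N, f (i + 1) = ∑ k ∈ Icc 1 N, f k := by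
  rw [Fin.sum_univ_eq_sum_range (fun i ↦ f (i + 1)), range_eq_Ico, sum_Ico_add', zero_add,
    Ico_add_one_right_eq_Icc]

theorem inner_pathVec (N : ℕ) (U V : ℕ → ℝ) :
    ⟪pathVec N U, pathVec N V⟫ = ∑ k ∈ Icc 1 N, U k * V k := by
  rw [← sum_fin_add_one N fun k ↦ U k * V k, PiLp.inner_apply]
  exact sum_congr rfl fun i _ ↦ mul_comm _ _

theorem norm_pathVec_sq (N : ℕ) (U : ℕ → ℝ) :
    ‖pathVec N U‖ ^ 2 = ∑ k ∈ Icc 1 N, U k ^ 2 := by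
  rw [← real_inner_self_eq_norm_sq, inner_pathVec]
  exact sum_congr rfl fun k _ ↦ (sq _).symm

theorem pathVec_eq_iff : pathVec N U = pathVec N V ↔ ∀ k ∈ Icc 1 N, U k = V k := by
  refine ⟨fun h k hk ↦ ?_, fun h ↦ ?_⟩
  · obtain ⟨hk₁, hkN⟩ := mem_Icc.1 hk
    obtain ⟨k, rfl⟩ := Nat.exists_eq_add_of_le' hk₁
    exact congrFun (congrArg WithLp.ofLp h) ⟨k, hkN⟩
  · ext i
    exact h (i + 1) (mem_Icc.2 ⟨by omega, by omega⟩)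

theorem pathH_mulVec (hN : 2 ≤ N) (W : ℕ → ℝ) (hU : IsNeumann N U) (i : Fin N) :
    (pathH N W).mulVec (fun j ↦ U (j + 1)) i
      = (2 + W (i + 1)) * U (i + 1) - U (i + 2) - U i := by
  obtain ⟨i, hi⟩ := i
  obtain ⟨d, hd⟩ : ∃ d : ℝ, d = if i = 0 ∨ i = N - 1 then 1 else 2 := ⟨_, rfl⟩
  have hentry (j : Fin N) : pathH N W ⟨i, hi⟩ j * U (j + 1)
      = (if (j : ℕ) = i then (d + W (i + 1)) * U (i + 1) else 0)
        - (if (j : ℕ) = i + 1 then U (i + 2) else 0) - (if (j : ℕ) + 1 = i then U i else 0) := by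
    simp only [pathH, Matrix.of_apply, Fin.ext_iff, ← hd]
    grind
  have hsum (c : ℕ) (y : ℝ) :
      ∑ j : Fin N, (if (j : ℕ) = c then y else 0) = if c < N then y else 0 := by
    rw [Fin.sum_univ_eq_sum_range fun j ↦ if j = c then y else 0]
    simp
  have hprev : ∑ j : Fin N, (if (j : ℕ) + 1 = i then U i else 0) = if i = 0 then 0 else U i := by
    cases i with
    | zero => simp
    | succ i => simp [hsum, (Nat.lt_of_succ_lt hi)]
  simp only [Matrix.mulVec, dotProduct, hentry, sum_sub_distrib, hsum, hprev, hi, if_true, hd]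
  have := hU.left
  have := hU.right
  grind

/-- `pathH` as an operator on Euclidean space. -/
noncomputable def pathOp (N : ℕ) (W : ℕ → ℝ) :
    EuclideanSpace ℝ (Fin N) →L[ℝ] EuclideanSpace ℝ (Fin N) :=
  Matrix.toEuclideanCLM (𝕜 := ℝ) (pathH N W)

theorem isSymmetric_pathOp (N : ℕ) (W : ℕ → ℝ) :
    (pathOp N W : EuclideanSpace ℝ (Fin N) →ₗ[ℝ] EuclideanSpace ℝ (Fin N)).IsSymmetric := by
  rw [pathOp, Matrix.coe_toEuclideanCLM_eq_toEuclideanLin, Matrix.isSymmetric_toEuclideanLin_iff]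
  ext i j
  simp only [pathH, Matrix.conjTranspose_apply, Matrix.of_apply, star_trivial]
  grind

theorem pathOp_pathVec (hN : 2 ≤ N) (W : ℕ → ℝ) (hU : IsNeumann N U) (i : Fin N) :
    pathOp N W (pathVec N U) i = (2 + W (i + 1)) * U (i + 1) - U (i + 2) - U i :=
  pathH_mulVec hN W hU i

theorem sum_second_difference_mul (U V : ℕ → ℝ) (n : ℕ) :
    ∑ k ∈ range n, (2 * U (k + 1) - U (k + 2) - U k) * V (k + 1)
      = ∑ k ∈ range (n + 1), (U (k + 1) - U k) * (V (k + 1) - V k)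
        - (U (n + 1) - U n) * V (n + 1) + (U 1 - U 0) * V 0 := by
  induction n with
  | zero => rw [sum_range_zero, sum_range_one]; ring
  | succ n ih => rw [sum_range_succ, ih, sum_range_succ _ (n + 1)]; ring

theorem inner_pathOp_pathVec (hN : 2 ≤ N) (W : ℕ → ℝ) (hU : IsNeumann N U) (V : ℕ → ℝ) :
    ⟪pathOp N W (pathVec N U), pathVec N V⟫
      = ∑ k ∈ range (N + 1), (U (k + 1) - U k) * (V (k + 1) - V k)
        + ∑ k ∈ Icc 1 N, W k * U k * V k := by
  have hparts := sum_second_difference_mul U V N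
  rw [hU.left, hU.right, sub_self, sub_self, zero_mul, zero_mul, sub_zero, add_zero] at hparts
  rw [← hparts, ← sum_fin_add_one N fun k ↦ W k * U k * V k,
    ← Fin.sum_univ_eq_sum_range fun k ↦ (2 * U (k + 1) - U (k + 2) - U k) * V (k + 1),
    ← sum_add_distrib, PiLp.inner_apply]
  refine sum_congr rfl fun i _ ↦ ?_
  rw [pathOp_pathVec hN W hU i, real_inner_eq_re_inner, RCLike.inner_apply]
  simp only [pathVec, conj_trivial, RCLike.re_to_real]
  ring

/-- Multiplication by the label of the vertex. -/
noncomputable def positionOp (N : ℕ) : EuclideanSpace ℝ (Fin N) →L[ℝ] EuclideanSpace ℝ (Fin N) :=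
  Matrix.toEuclideanCLM (𝕜 := ℝ) (Matrix.diagonal fun i ↦ (i : ℝ) + 1)

theorem inner_positionOp_pathVec (N : ℕ) (U : ℕ → ℝ) :
    ⟪positionOp N (pathVec N U), pathVec N U⟫ = ∑ k ∈ Icc 1 N, (k : ℝ) * U k ^ 2 := by
  rw [← sum_fin_add_one N fun k ↦ (k : ℝ) * U k ^ 2, real_inner_comm, positionOp,
    Matrix.inner_toEuclideanCLM]
  simp only [dotProduct, Matrix.mulVec_diagonal, pathVec, Nat.cast_add, Nat.cast_one]
  exact sum_congr rfl fun i _ ↦ by ring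

theorem pathOp_linear (N : ℕ) (a b : ℝ) :
    pathOp N (fun k ↦ a * k + b) = pathOp N (fun _ ↦ b) + a • positionOp N := by
  rw [pathOp, pathOp, positionOp, ← map_smul, ← map_add]
  congr 1
  ext i j
  simp only [pathH, Matrix.of_apply, Matrix.add_apply, Matrix.smul_apply, Matrix.diagonal_apply]
  split_ifs <;> push_cast <;> simp only [smul_eq_mul] <;> ring

/-- The eigenvalue equation `H_W U = l U`, with the boundary vertices treated like the others thanks
to the ghost vertices. -/
structure IsPathSolution (N : ℕ) (W : ℕ → ℝ) (l : ℝ) (U : ℕ → ℝ) : Prop extends IsNeumann N U where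
  add_eq : ∀ k < N, U (k + 2) + U k = (2 + W (k + 1) - l) * U (k + 1)

theorem pathOp_pathVec_eq_smul_iff (hN : 2 ≤ N) (hU : IsNeumann N U) :
    pathOp N W (pathVec N U) = l • pathVec N U ↔ IsPathSolution N W l U := by
  have hcoord (i : Fin N) : pathOp N W (pathVec N U) i = (l • pathVec N U) i ↔
      U (i + 2) + U i = (2 + W (i + 1) - l) * U (i + 1) := by
    rw [pathOp_pathVec hN W hU, PiLp.smul_apply, smul_eq_mul, pathVec]
    constructor <;> intro h <;> linarith
  refine ⟨fun h ↦ ⟨hU, fun k hk ↦ (hcoord ⟨k, hk⟩).1 (by rw [h])⟩, fun h ↦ ?_⟩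
  ext i
  exact (hcoord i).2 (h.add_eq i i.2)

namespace IsPathSolution

theorem eq_zero_of_apply_one (hU : IsPathSolution N W l U) (h1 : U 1 = 0) :
    ∀ k ≤ N + 1, U k = 0 := by
  intro k
  induction k using Nat.twoStepInduction with
  | zero => intro; rw [hU.left, h1]
  | one => intro; exact h1
  | more k ih₁ ih₂ =>
    intro hk
    have hrec := hU.add_eq k (by omega)
    rwa [ih₁ (by omega), ih₂ (by omega), mul_zero, add_zero] at hrec

theorem pathVec_eq_zero_iff (hN : N ≠ 0) (hU : IsPathSolution N W l U) :
    pathVec N U = 0 ↔ U 1 = 0 :=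
  ⟨fun h ↦ pathVec_eq_iff.1 (h.trans rfl : _ = pathVec N 0) 1 (mem_Icc.2 ⟨le_rfl, by omega⟩),
    fun h ↦ pathVec_eq_iff.2 fun k hk ↦
      hU.eq_zero_of_apply_one h k ((mem_Icc.1 hk).2.trans (by omega))⟩

theorem apply_one_mul_eq (hU : IsPathSolution N W l U) (hV : IsPathSolution N W l V) :
    ∀ k ≤ N + 1, V 1 * U k = U 1 * V k := by
  have hcomb : IsPathSolution N W l fun k ↦ V 1 * U k - U 1 * V k :=
    ⟨hU.toIsNeumann.comp₂ (fun s t ↦ V 1 * s - U 1 * t) hV.toIsNeumann, fun k hk ↦ by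
      linear_combination V 1 * hU.add_eq k hk - U 1 * hV.add_eq k hk⟩
  exact fun k hk ↦ sub_eq_zero.1 (hcomb.eq_zero_of_apply_one (by ring) k hk)

theorem reflect (hU : IsPathSolution N W l U) :
    IsPathSolution N (fun k ↦ W (N + 1 - k)) l fun k ↦ U (N + 1 - k) where
  left := by simpa using hU.right
  right := by simpa using hU.left
  add_eq k hk := by
    have hrec := hU.add_eq (N - (k + 1)) (by omega)
    rw [show N - (k + 1) + 2 = N + 1 - k by omega, show N - (k + 1) + 1 = N + 1 - (k + 1) by omega,
      show N - (k + 1) = N + 1 - (k + 2) by omega] at hrec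
    linarith

end IsPathSolution

theorem isEigen_pathH_iff (hN : 2 ≤ N) :
    IsEigen (pathH N W) l ↔ ∃ U, IsPathSolution N W l U ∧ U 1 ≠ 0 := by
  constructor
  · rintro ⟨x, hx, hWx⟩
    obtain ⟨U, hU, hUx⟩ := exists_isNeumann_pathVec_eq (by omega) (WithLp.toLp 2 x)
    have hsol : IsPathSolution N W l U := by
      rw [← pathOp_pathVec_eq_smul_iff hN hU, hUx]
      exact congrArg (WithLp.toLp 2) hWx
    refine ⟨U, hsol, ?_⟩
    rw [Ne, ← hsol.pathVec_eq_zero_iff (by omega), hUx]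
    simpa using hx
  · rintro ⟨U, hU, hU1⟩
    refine ⟨(pathVec N U).ofLp, ?_, ?_⟩
    · rwa [Ne, WithLp.ofLp_eq_zero, hU.pathVec_eq_zero_iff (by omega)]
    · exact congrArg WithLp.ofLp ((pathOp_pathVec_eq_smul_iff hN hU.toIsNeumann).2 hU)

theorem isEigen_pathH_reflect_iff (hN : 2 ≤ N) {W' : ℕ → ℝ}
    (hW : ∀ k ∈ Icc 1 N, W' k = W (N + 1 - k)) :
    IsEigen (pathH N W') l ↔ IsEigen (pathH N W) l := by
  have key {W W' : ℕ → ℝ} (hW : ∀ k ∈ Icc 1 N, W' k = W (N + 1 - k))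
      (h : IsEigen (pathH N W) l) : IsEigen (pathH N W') l := by
    obtain ⟨U, hU, hU1⟩ := (isEigen_pathH_iff hN).1 h
    refine (isEigen_pathH_iff hN).2 ⟨_, ⟨hU.reflect.toIsNeumann, fun k hk ↦ ?_⟩, ?_⟩
    · rw [hU.reflect.add_eq k hk, hW (k + 1) (mem_Icc.2 ⟨by omega, by omega⟩)]
    · intro h1
      have := hU.reflect.eq_zero_of_apply_one h1 N (by omega)
      exact hU1 (by simpa using this)
  refine ⟨key fun k hk ↦ ?_, key hW⟩
  have := mem_Icc.1 hk
  rw [hW _ (mem_Icc.2 ⟨by omega, by omega⟩), Nat.sub_sub_self (by omega)]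

theorem TwoSmallest.congr {n : ℕ} {A B : Matrix (Fin n) (Fin n) ℝ} {l₁ l₂ : ℝ}
    (hAB : ∀ μ, IsEigen A μ ↔ IsEigen B μ) (h : TwoSmallest A l₁ l₂) : TwoSmallest B l₁ l₂ := by
  simpa only [TwoSmallest, hAB] using h

theorem TwoSmallest.unique {n : ℕ} {A : Matrix (Fin n) (Fin n) ℝ} {l₁ l₂ m₁ m₂ : ℝ}
    (hl : TwoSmallest A l₁ l₂) (hm : TwoSmallest A m₁ m₂) : l₁ = m₁ ∧ l₂ = m₂ := by
  obtain ⟨hl₁, hl₂, hl, hl_min⟩ := hl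
  obtain ⟨hm₁, hm₂, hm, hm_min⟩ := hm
  have h₁ : l₁ = m₁ := le_antisymm (hl_min _ hm₁).1 (hm_min _ hl₁).1
  exact ⟨h₁, le_antisymm ((hl_min _ hm₂).2 (h₁ ▸ hm.ne')) ((hm_min _ hl₂).2 (h₁ ▸ hl.ne'))⟩

theorem IsLowestPair.twoSmallest {l₁ l₂ : ℝ} {u v : EuclideanSpace ℝ (Fin N)}
    (h : IsLowestPair (pathOp N W) l₁ l₂ u v) : TwoSmallest (pathH N W) l₁ l₂ := by
  have hu : u ≠ 0 := norm_ne_zero_iff.1 (by rw [h.norm_fst]; exact one_ne_zero)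
  have hv : v ≠ 0 := norm_ne_zero_iff.1 (by rw [h.norm_snd]; exact one_ne_zero)
  refine ⟨⟨u.ofLp, by simpa, congrArg WithLp.ofLp h.apply_fst⟩,
    ⟨v.ofLp, by simpa, congrArg WithLp.ofLp h.apply_snd⟩, h.lt, ?_⟩
  rintro μ ⟨x, hx, hWx⟩
  exact h.le_of_apply_eq_smul (x := WithLp.toLp 2 x) (by simpa) (congrArg (WithLp.toLp 2) hWx)

end Path

section FiniteSums

open Finset

theorem sum_sum_mul_sub_mul_sub {ι : Type*} (s : Finset ι) (m p q : ι → ℝ) :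
    ∑ i ∈ s, ∑ j ∈ s, m i * m j * ((p i - p j) * (q i - q j))
      = 2 * ((∑ i ∈ s, m i) * ∑ i ∈ s, m i * p i * q i
        - (∑ i ∈ s, m i * p i) * ∑ i ∈ s, m i * q i) := by
  have hterm (i j : ι) : m i * m j * ((p i - p j) * (q i - q j))
      = m i * p i * q i * m j + m i * (m j * p j * q j)
        - (m i * p i * (m j * q j) + m i * q i * (m j * p j)) := by ring
  simp only [hterm, sum_sub_distrib, sum_add_distrib, ← sum_mul_sum]
  ring

theorem eq_zero_of_sum_mul_eq_zero {ι : Type*} [LinearOrder ι] {s : Finset ι} {r f g : ι → ℝ}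
    (hr : ∀ i ∈ s, 0 < r i) (hf : MonotoneOn f s) (hg : StrictMonoOn g s)
    (hmass : ∑ i ∈ s, r i * f i = 0) (hmoment : ∑ i ∈ s, r i * f i * g i = 0) :
    ∀ i ∈ s, f i = 0 := by
  have hterm (i) (hi : i ∈ s) (j) (hj : j ∈ s) :
      0 ≤ r i * r j * ((f i - f j) * (g i - g j)) := by
    refine mul_nonneg (mul_pos (hr i hi) (hr j hj)).le ?_
    rcases le_total i j with hij | hij
    · exact mul_nonneg_of_nonpos_of_nonpos (sub_nonpos.2 (hf hi hj hij))
        (sub_nonpos.2 (hg.monotoneOn hi hj hij))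
    · exact mul_nonneg (sub_nonneg.2 (hf hj hi hij)) (sub_nonneg.2 (hg.monotoneOn hj hi hij))
  have hsum := sum_sum_mul_sub_mul_sub s r f g
  rw [hmass, hmoment, mul_zero, zero_mul, sub_zero, mul_zero,
    sum_eq_zero_iff_of_nonneg fun i hi ↦ sum_nonneg (hterm i hi)] at hsum
  have hconst (i) (hi : i ∈ s) (j) (hj : j ∈ s) : f i = f j := by
    by_cases hij : i = j
    · rw [hij]
    have hzero := (sum_eq_zero_iff_of_nonneg (hterm i hi)).1 (hsum i hi) j hj
    rw [mul_eq_zero_iff_left (mul_pos (hr i hi) (hr j hj)).ne', mul_eq_zero_iff_right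
      (sub_ne_zero.2 (hg.injOn.ne hi hj hij)), sub_eq_zero] at hzero
    exact hzero
  intro i hi
  have hmass' : f i * ∑ j ∈ s, r j = 0 := by
    rw [← hmass, mul_sum]
    exact sum_congr rfl fun j hj ↦ by rw [hconst i hi j hj, mul_comm]
  exact (mul_eq_zero_iff_right (sum_pos hr ⟨i, hi⟩).ne').1 hmass'

theorem sum_two_mul_sub_mul_pos {N : ℕ} (hN : 2 ≤ N) {g : ℕ → ℝ}
    (hg : ∀ k ∈ Icc 1 N, 2 * k ≤ N + 1 → g k ≤ g (N + 1 - k)) (hg1 : g 1 < g N) :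
    0 < ∑ k ∈ Icc 1 N, (2 * (k : ℝ) - (N + 1)) * g k := by
  have hreflect : ∑ k ∈ Icc 1 N, (2 * (k : ℝ) - (N + 1)) * g k
      = ∑ k ∈ Icc 1 N, ((N + 1) - 2 * (k : ℝ)) * g (N + 1 - k) := by
    refine sum_nbij' (N + 1 - ·) (N + 1 - ·) ?_ ?_ ?_ ?_ fun k hk ↦ ?_
    · grind
    · grind
    · grind
    · grind
    · have hk := mem_Icc.1 hk
      rw [Nat.sub_sub_self (by omega), Nat.cast_sub (by omega)]
      push_cast
      ring
  have hdouble : 2 * ∑ k ∈ Icc 1 N, (2 * (k : ℝ) - (N + 1)) * g k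
      = ∑ k ∈ Icc 1 N, ((N + 1) - 2 * (k : ℝ)) * (g (N + 1 - k) - g k) := by
    rw [two_mul]
    nth_rw 2 [hreflect]
    rw [← sum_add_distrib]
    exact sum_congr rfl fun k _ ↦ by ring
  have hpos : 0 < ∑ k ∈ Icc 1 N, ((N + 1) - 2 * (k : ℝ)) * (g (N + 1 - k) - g k) := by
    refine sum_pos' (fun k hk ↦ ?_) ⟨1, mem_Icc.2 ⟨le_rfl, by omega⟩, ?_⟩
    · have hk' := mem_Icc.1 hk
      rcases le_total (2 * k) (N + 1) with h | h
      · have : 2 * (k : ℝ) ≤ N + 1 := by exact_mod_cast h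
        exact mul_nonneg (by linarith) (sub_nonneg.2 (hg k hk h))
      · have : (N : ℝ) + 1 ≤ 2 * k := by exact_mod_cast h
        have hle := hg (N + 1 - k) (mem_Icc.2 ⟨by omega, by omega⟩) (by omega)
        rw [Nat.sub_sub_self (by omega)] at hle
        exact mul_nonneg_of_nonpos_of_nonpos (by linarith) (sub_nonpos.2 hle)
    · have : (2 : ℝ) ≤ N := by exact_mod_cast hN
      exact mul_pos (by push_cast; linarith) (by simpa using hg1)
  linarith

theorem sum_Icc_one_cast_mul_two (n : ℕ) : (∑ k ∈ Icc 1 n, (k : ℝ)) * 2 = n * (n + 1) := by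
  induction n with
  | zero => simp
  | succ n ih =>
    rw [sum_Icc_succ_top (by omega), add_mul, ih]
    push_cast
    ring

theorem sum_two_mul_sub_mul_pos_of_crossing {N s : ℕ} {g : ℕ → ℝ} {c : ℝ} (hs : s < N)
    (hsN : 2 * s ≤ N + 1) (hlow : ∀ k ∈ Icc 1 N, k < s → g k ≤ c)
    (hhigh : ∀ k ∈ Icc 1 N, s ≤ k → c ≤ g k) (hgN : c < g N) (hmass : ∑ k ∈ Icc 1 N, g k ≤ N * c) :
    0 < ∑ k ∈ Icc 1 N, (2 * (k : ℝ) - (N + 1)) * g k := by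
  have hcross : 0 < ∑ k ∈ Icc 1 N, ((k : ℝ) - s) * (g k - c) := by
    refine sum_pos' (fun k hk ↦ ?_) ⟨N, mem_Icc.2 ⟨by omega, le_rfl⟩, ?_⟩
    · rcases lt_or_ge k s with hks | hks
      · exact mul_nonneg_of_nonpos_of_nonpos (sub_nonpos.2 (Nat.cast_le.2 hks.le))
          (sub_nonpos.2 (hlow k hk hks))
      · exact mul_nonneg (sub_nonneg.2 (Nat.cast_le.2 hks)) (sub_nonneg.2 (hhigh k hk hks))
    · exact mul_pos (sub_pos.2 (Nat.cast_lt.2 hs)) (sub_pos.2 hgN)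
  have hterm (k : ℕ) : (2 * (k : ℝ) - (N + 1)) * g k
      = 2 * (((k : ℝ) - s) * (g k - c)) + (2 * s - (N + 1)) * g k + c * (k * 2) - 2 * s * c := by
    ring
  simp only [hterm, sum_sub_distrib, sum_add_distrib, ← mul_sum, ← sum_mul,
    sum_Icc_one_cast_mul_two, sum_const, Nat.card_Icc, nsmul_eq_mul, Nat.add_sub_cancel]
  have : 2 * (s : ℝ) ≤ N + 1 := by exact_mod_cast hsN
  nlinarith

theorem abs_sub_eq_of_variance_le {ι : Type*} {s : Finset ι} {m p q : ι → ℝ}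
    (hm : ∀ i ∈ s, 0 < m i) (hpq : ∀ i ∈ s, ∀ j ∈ s, |p i - p j| ≤ |q i - q j|)
    (hvar : (∑ i ∈ s, m i) * ∑ i ∈ s, m i * q i * q i - (∑ i ∈ s, m i * q i) ^ 2
      ≤ (∑ i ∈ s, m i) * ∑ i ∈ s, m i * p i * p i - (∑ i ∈ s, m i * p i) ^ 2) :
    ∀ i ∈ s, ∀ j ∈ s, |p i - p j| = |q i - q j| := by
  have hterm (i) (hi : i ∈ s) (j) (hj : j ∈ s) :
      m i * m j * ((p i - p j) * (p i - p j)) ≤ m i * m j * ((q i - q j) * (q i - q j)) := by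
    have := hm i hi
    have := hm j hj
    simp only [← sq]
    gcongr m i * m j * ?_
    exact sq_le_sq.2 (hpq i hi j hj)
  have hsum : ∑ i ∈ s, ∑ j ∈ s, m i * m j * ((p i - p j) * (p i - p j))
      = ∑ i ∈ s, ∑ j ∈ s, m i * m j * ((q i - q j) * (q i - q j)) := by
    refine le_antisymm (sum_le_sum fun i hi ↦ sum_le_sum (hterm i hi)) ?_
    rw [sum_sum_mul_sub_mul_sub, sum_sum_mul_sub_mul_sub]
    linarith
  intro i hi j hj
  rw [sum_eq_sum_iff_of_le fun i hi ↦ sum_le_sum (hterm i hi)] at hsum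
  have heq := (sum_eq_sum_iff_of_le (hterm i hi)).1 (hsum i hi) j hj
  rw [mul_right_inj' (mul_pos (hm i hi) (hm j hj)).ne', ← sq, ← sq] at heq
  exact sq_eq_sq_iff_abs_eq_abs _ _ |>.1 heq

theorem abs_sub_le_abs_sum_abs_sub (f : ℕ → ℝ) (i j : ℕ) :
    |f i - f j| ≤ |(∑ k ∈ range i, |f (k + 1) - f k|) - (∑ k ∈ range j, |f (k + 1) - f k|)| := by
  wlog hij : i ≤ j generalizing i j
  · rw [abs_sub_comm, abs_sub_comm (∑ k ∈ range i, _)]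
    exact this j i (le_of_not_ge hij)
  rw [abs_sub_comm, abs_sub_comm (∑ k ∈ range i, _), ← sum_Ico_eq_sub _ hij, ← sum_Ico_sub f hij]
  exact (abs_sum_le_sum_abs _ _).trans (le_abs_self _)

theorem monotoneOn_of_sum_abs_sub_le {f : ℕ → ℝ} {m n : ℕ} (hmn : m ≤ n)
    (h : ∑ k ∈ Ico m n, |f (k + 1) - f k| ≤ f n - f m) : MonotoneOn f (Set.Icc m n) := by
  rw [← sum_Ico_sub f hmn] at h
  have heq := (sum_eq_sum_iff_of_le fun k _ ↦ le_abs_self (f (k + 1) - f k)).1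
    (le_antisymm (sum_le_sum fun k _ ↦ le_abs_self _) h)
  refine monotoneOn_of_le_add_one Set.ordConnected_Icc fun k _ hk hk' ↦ ?_
  have hk := heq k (mem_Ico.2 ⟨hk.1, hk'.2⟩)
  rw [← sub_nonneg, hk]
  exact abs_nonneg _

theorem monotoneOn_or_antitoneOn_of_sum_abs_sub_le {f : ℕ → ℝ} {m n : ℕ} (hmn : m ≤ n)
    (h : ∑ k ∈ Ico m n, |f (k + 1) - f k| ≤ |f n - f m|) :
    MonotoneOn f (Set.Icc m n) ∨ AntitoneOn f (Set.Icc m n) := by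
  rcases abs_cases (f n - f m) with ⟨habs, _⟩ | ⟨habs, _⟩
  · exact .inl (monotoneOn_of_sum_abs_sub_le hmn (h.trans_eq habs))
  · refine .inr (neg_neg f ▸ (monotoneOn_of_sum_abs_sub_le (f := -f) hmn ?_).neg)
    have hneg (k : ℕ) : |-f (k + 1) - -f k| = |f (k + 1) - f k| := by
      rw [neg_sub_neg, abs_sub_comm]
    simp only [Pi.neg_apply, hneg]
    linarith

end FiniteSums

section PathPair

open Finset
open scoped RealInnerProductSpace

variable {N : ℕ} {W U V : ℕ → ℝ} {l₁ l₂ : ℝ}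

theorem exists_isLowestPair_pathOp (hN : 2 ≤ N) (W : ℕ → ℝ) :
    ∃ l₁ l₂ U V, IsNeumann N U ∧ IsNeumann N V ∧
      IsLowestPair (pathOp N W) l₁ l₂ (pathVec N U) (pathVec N V) := by
  have hN₀ : N ≠ 0 := by omega
  obtain ⟨l₁, l₂, x, y, h⟩ := exists_isLowestPair (isSymmetric_pathOp N W) (by simpa) (by
    intro μ x y hx hy hxy
    obtain ⟨U, hU, rfl⟩ := exists_isNeumann_pathVec_eq hN₀ x
    obtain ⟨V, hV, rfl⟩ := exists_isNeumann_pathVec_eq hN₀ y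
    have hUsol := (pathOp_pathVec_eq_smul_iff hN hU).1 hx
    have hVsol := (pathOp_pathVec_eq_smul_iff hN hV).1 hy
    have hprod : V 1 * ⟪pathVec N U, pathVec N V⟫ = U 1 * ‖pathVec N V‖ ^ 2 := by
      rw [inner_pathVec, norm_pathVec_sq, mul_sum, mul_sum]
      refine sum_congr rfl fun k hk ↦ ?_
      linear_combination V k * hUsol.apply_one_mul_eq hVsol k ((mem_Icc.1 hk).2.trans (by omega))
    rw [hxy, mul_zero, zero_eq_mul, sq_eq_zero_iff, norm_eq_zero] at hprod
    exact hprod.imp_left (hUsol.pathVec_eq_zero_iff hN₀).2)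
  obtain ⟨U, hU, rfl⟩ := exists_isNeumann_pathVec_eq hN₀ x
  obtain ⟨V, hV, rfl⟩ := exists_isNeumann_pathVec_eq hN₀ y
  exact ⟨l₁, l₂, U, V, hU, hV, h⟩

theorem IsPathSolution.pos_of_nonneg {l : ℝ} (hU : IsPathSolution N W l U) (hU1 : U 1 ≠ 0)
    (hnonneg : ∀ k, 0 ≤ U k) : ∀ k ∈ Icc 1 N, 0 < U k := by
  have hpos (k : ℕ) (hk : k ≤ N) : 0 < U (k + 1) := by
    induction k with
    | zero => exact (hnonneg 1).lt_of_ne' hU1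
    | succ k ih =>
      refine (hnonneg _).lt_of_ne' fun h0 ↦ ?_
      rcases hk.lt_or_eq with hk | rfl
      · have hrec := hU.add_eq (k + 1) hk
        rw [h0, mul_zero] at hrec
        linarith [ih (by omega), hnonneg (k + 3)]
      · exact (ih (by omega)).ne' (hU.right ▸ h0)
  intro k hk
  have hk := mem_Icc.1 hk
  exact Nat.sub_add_cancel hk.1 ▸ hpos (k - 1) (by omega)

/-- The energy of `|U|` does not exceed that of `U`, hence `|U|` is again a ground state. -/
theorem IsLowestPair.forall_pos_or_forall_neg (hN : 2 ≤ N) (hU : IsNeumann N U)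
    {v : EuclideanSpace ℝ (Fin N)} (h : IsLowestPair (pathOp N W) l₁ l₂ (pathVec N U) v) :
    (∀ k ∈ Icc 1 N, 0 < U k) ∨ ∀ k ∈ Icc 1 N, U k < 0 := by
  have habs : IsNeumann N fun k ↦ |U k| := hU.comp₂ (fun s _ ↦ |s|) hU
  have hnorm : ‖pathVec N fun k ↦ |U k|‖ ^ 2 = 1 := by
    simpa [norm_pathVec_sq, h.norm_fst] using (norm_pathVec_sq N U).symm
  have henergy : ⟪pathOp N W (pathVec N fun k ↦ |U k|), pathVec N fun k ↦ |U k|⟫ ≤ l₁ := by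
    rw [← h.inner_apply_fst, inner_pathOp_pathVec hN W habs, inner_pathOp_pathVec hN W hU]
    simp only [mul_assoc, abs_mul_abs_self]
    gcongr ?_ + _
    refine sum_le_sum fun k _ ↦ ?_
    simpa only [← sq] using sq_le_sq.2 (abs_abs_sub_abs_le _ _)
  obtain ⟨c, hc⟩ : ∃ c : ℝ, pathVec N (fun k ↦ |U k|) = c • pathVec N U :=
    ⟨_, h.eq_inner_smul_of_inner_apply_le (henergy.trans_eq (by rw [hnorm, mul_one]))⟩
  have hsol : IsPathSolution N W l₁ fun k ↦ |U k| := by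
    rw [← pathOp_pathVec_eq_smul_iff hN habs, hc, map_smul, h.apply_fst, smul_comm]
  have hU1 : |U 1| ≠ 0 := fun h1 ↦ by
    simp [(hsol.pathVec_eq_zero_iff (by omega)).2 h1] at hnorm
  have hpos (k : ℕ) (hk : k ∈ Icc 1 N) : 0 < c * U k :=
    (hsol.pos_of_nonneg hU1 (fun k ↦ abs_nonneg (U k)) k hk).trans_eq
      ((pathVec_eq_iff (V := fun k ↦ c * U k)).1 hc k hk)
  rcases le_total 0 c with hc | hc
  · exact .inl fun k hk ↦ pos_of_mul_pos_right (hpos k hk) hc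
  · exact .inr fun k hk ↦ neg_of_mul_pos_right (hpos k hk) hc

theorem inner_pathOp_pathVec_mul {l : ℝ} {p : ℕ → ℝ} (hN : 2 ≤ N) (hU : IsPathSolution N W l U)
    (hp : IsNeumann N p) :
    ⟪pathOp N W (pathVec N fun k ↦ U k * p k), pathVec N fun k ↦ U k * p k⟫
      = l * ∑ k ∈ Icc 1 N, (U k * p k) ^ 2
        + ∑ k ∈ range (N + 1), U k * U (k + 1) * (p (k + 1) - p k) ^ 2 := by
  have hsq := inner_pathOp_pathVec hN W hU.toIsNeumann fun k ↦ U k * p k ^ 2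
  rw [(pathOp_pathVec_eq_smul_iff hN hU.toIsNeumann).2 hU, real_inner_smul_left,
    inner_pathVec] at hsq
  have hdiff (k : ℕ) : (U (k + 1) * p (k + 1) - U k * p k) * (U (k + 1) * p (k + 1) - U k * p k)
      = (U (k + 1) - U k) * (U (k + 1) * p (k + 1) ^ 2 - U k * p k ^ 2)
        + U k * U (k + 1) * (p (k + 1) - p k) ^ 2 := by ring
  have hpot (k : ℕ) : W k * (U k * p k) * (U k * p k) = W k * U k * (U k * p k ^ 2) := by ring
  have hmass (k : ℕ) : (U k * p k) ^ 2 = U k * (U k * p k ^ 2) := by ring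
  rw [inner_pathOp_pathVec hN W (hU.toIsNeumann.comp₂ (· * ·) hp)]
  simp only [hdiff, hpot, hmass, sum_add_distrib]
  rw [hsq]
  ring

theorem IsLowestPair.variance_le_one (hN : 2 ≤ N) (hU : IsNeumann N U) (hV : IsNeumann N V)
    (hpos : ∀ k ∈ Icc 1 N, 0 < U k)
    (h : IsLowestPair (pathOp N W) l₁ l₂ (pathVec N U) (pathVec N V)) {P : ℕ → ℝ}
    (hP : IsNeumann N P)
    (hdiff : ∀ k, |P (k + 1) - P k| = |V (k + 1) / U (k + 1) - V k / U k|) :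
    ∑ k ∈ Icc 1 N, U k ^ 2 * P k * P k - (∑ k ∈ Icc 1 N, U k ^ 2 * P k) ^ 2 ≤ 1 := by
  have hUsol := (pathOp_pathVec_eq_smul_iff hN hU).1 h.apply_fst
  have hmass : ∑ k ∈ Icc 1 N, U k ^ 2 = 1 := by rw [← norm_pathVec_sq, h.norm_fst, one_pow]
  obtain ⟨c, hc⟩ : ∃ c, c = ∑ k ∈ Icc 1 N, U k ^ 2 * P k := ⟨_, rfl⟩
  have hVp : pathVec N V = pathVec N fun k ↦ U k * (V k / U k) := pathVec_eq_iff.2 fun k hk ↦ by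
    rw [mul_div_cancel₀ _ (hpos k hk).ne']
  have hxN : IsNeumann N fun k ↦ P k - c := hP.comp₂ (fun s _ ↦ s - c) hP
  have hinner : ⟪pathVec N U, pathVec N fun k ↦ U k * (P k - c)⟫ = 0 := by
    have hterm (k : ℕ) : U k * (U k * (P k - c)) = U k ^ 2 * P k - U k ^ 2 * c := by ring
    simp only [inner_pathVec, hterm, sum_sub_distrib, ← sum_mul, hmass, ← hc]
    ring
  have hnorm : ∑ k ∈ Icc 1 N, (U k * (P k - c)) ^ 2
      = ∑ k ∈ Icc 1 N, U k ^ 2 * P k * P k - c ^ 2 := by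
    have hterm (k : ℕ) : (U k * (P k - c)) ^ 2
        = U k ^ 2 * P k * P k - U k ^ 2 * P k * (2 * c) + U k ^ 2 * c ^ 2 := by ring
    simp only [hterm, sum_sub_distrib, sum_add_distrib, ← sum_mul, hmass, ← hc]
    ring
  have hle := h.le_inner_of_inner_eq_zero _ hinner
  have hl₂ := h.inner_apply_snd
  have hV_norm := norm_pathVec_sq N fun k ↦ U k * (V k / U k)
  rw [← hVp, h.norm_snd] at hV_norm
  rw [hVp, inner_pathOp_pathVec_mul hN hUsol (hV.comp₂ (· / ·) hU), ← hV_norm] at hl₂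
  rw [inner_pathOp_pathVec_mul hN hUsol hxN, norm_pathVec_sq, hnorm] at hle
  simp only [sub_sub_sub_cancel_right, ← sq_abs (P _ - P _), hdiff, sq_abs] at hle
  rw [← hc]
  nlinarith [h.lt]

/-- Replacing `p` by its total variation `P` leaves the energy of `U * p` relative to `l₁` unchanged
and does not decrease its variance with respect to `U ^ 2`. As the variational principle for `l₂`
bounds the variance of `P` by that of `p`, no variation cancels out. -/
theorem IsLowestPair.monotoneOn_or_antitoneOn_div (hN : 2 ≤ N) (hU : IsNeumann N U)
    (hV : IsNeumann N V) (hpos : ∀ k ∈ Icc 1 N, 0 < U k)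
    (h : IsLowestPair (pathOp N W) l₁ l₂ (pathVec N U) (pathVec N V)) :
    MonotoneOn (fun k ↦ V k / U k) (Set.Icc 1 N) ∨
      AntitoneOn (fun k ↦ V k / U k) (Set.Icc 1 N) := by
  obtain ⟨p, hp⟩ : ∃ p, p = fun k ↦ V k / U k := ⟨_, rfl⟩
  obtain ⟨P, hP⟩ : ∃ P : ℕ → ℝ, P = fun k ↦ ∑ j ∈ range k, |p (j + 1) - p j| := ⟨_, rfl⟩
  have hpN : IsNeumann N p := hp ▸ hV.comp₂ (· / ·) hU
  have hPN : IsNeumann N P := ⟨by simp [hP, hpN.left], by simp [hP, sum_range_succ, hpN.right]⟩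
  have hPdiff (k : ℕ) : |P (k + 1) - P k| = |p (k + 1) - p k| := by
    simp [hP, sum_range_succ]
  have hvar := h.variance_le_one hN hU hV hpos hPN (by simpa only [hp] using hPdiff)
  have hmass : ∑ k ∈ Icc 1 N, U k ^ 2 = 1 := by rw [← norm_pathVec_sq, h.norm_fst, one_pow]
  have hmean : ∑ k ∈ Icc 1 N, U k ^ 2 * p k = 0 := by
    rw [← h.inner_eq_zero, inner_pathVec]
    refine sum_congr rfl fun k hk ↦ ?_
    rw [hp, sq, mul_assoc, mul_div_cancel₀ _ (hpos k hk).ne']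
  have hsecond : ∑ k ∈ Icc 1 N, U k ^ 2 * p k * p k = 1 := by
    have hnorm := norm_pathVec_sq N V
    rw [h.norm_snd, one_pow] at hnorm
    rw [hnorm]
    refine sum_congr rfl fun k hk ↦ ?_
    have := (hpos k hk).ne'
    rw [hp]
    field
  have hmem₁ : 1 ∈ Icc 1 N := mem_Icc.2 ⟨le_rfl, by omega⟩
  have hmemN : N ∈ Icc 1 N := mem_Icc.2 ⟨by omega, le_rfl⟩
  have habs := abs_sub_eq_of_variance_le (q := P) (fun k hk ↦ sq_pos_of_pos (hpos k hk))
    (fun i _ j _ ↦ by simpa only [hP] using abs_sub_le_abs_sum_abs_sub p i j)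
    (by rw [hmass, hmean, hsecond]; linarith) N hmemN 1 hmem₁
  refine hp ▸ monotoneOn_or_antitoneOn_of_sum_abs_sub_le (by omega) ?_
  rw [habs, hP, sum_Ico_eq_sub _ (by omega)]
  exact le_abs_self _

/-- An `IsLowestPair` of `pathOp` described by sequences, normalized by the choice of signs: the
ground state `U` is positive and `V / U` increases. -/
structure IsPathPair (N : ℕ) (W : ℕ → ℝ) (l₁ l₂ : ℝ) (U V : ℕ → ℝ) : Prop
    extends IsLowestPair (pathOp N W) l₁ l₂ (pathVec N U) (pathVec N V) where
  isPathSolution_fst : IsPathSolution N W l₁ U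
  isPathSolution_snd : IsPathSolution N W l₂ V
  fst_pos : ∀ k ∈ Icc 1 N, 0 < U k
  monotoneOn_div : MonotoneOn (fun k ↦ V k / U k) (Set.Icc 1 N)

theorem exists_isPathPair (hN : 2 ≤ N) (W : ℕ → ℝ) : ∃ l₁ l₂ U V, IsPathPair N W l₁ l₂ U V := by
  obtain ⟨l₁, l₂, U, V, hU, hV, h⟩ := exists_isLowestPair_pathOp hN W
  wlog hpos : ∀ k ∈ Icc 1 N, 0 < U k generalizing U
  · refine this (-U) (hU.comp₂ (fun s _ ↦ -s) hU) h.neg_fst fun k hk ↦ ?_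
    exact neg_pos.2 ((h.forall_pos_or_forall_neg hN hU).resolve_left hpos k hk)
  wlog hmono : MonotoneOn (fun k ↦ V k / U k) (Set.Icc 1 N) generalizing V
  · refine this (-V) (hV.comp₂ (fun s _ ↦ -s) hV) h.neg_snd ?_
    have hanti := (h.monotoneOn_or_antitoneOn_div hN hU hV hpos).resolve_left hmono
    simpa only [Pi.neg_apply, neg_div] using hanti.neg
  exact ⟨l₁, l₂, U, V, h, (pathOp_pathVec_eq_smul_iff hN hU).1 h.apply_fst,
    (pathOp_pathVec_eq_smul_iff hN hV).1 h.apply_snd, hpos, hmono⟩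

namespace IsPathPair

theorem sum_fst_sq (h : IsPathPair N W l₁ l₂ U V) : ∑ k ∈ Icc 1 N, U k ^ 2 = 1 := by
  rw [← norm_pathVec_sq, h.norm_fst, one_pow]

theorem sum_snd_sq (h : IsPathPair N W l₁ l₂ U V) : ∑ k ∈ Icc 1 N, V k ^ 2 = 1 := by
  rw [← norm_pathVec_sq, h.norm_snd, one_pow]

theorem sum_fst_mul_snd (h : IsPathPair N W l₁ l₂ U V) : ∑ k ∈ Icc 1 N, U k * V k = 0 := by
  rw [← inner_pathVec, h.inner_eq_zero]

end IsPathPair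

end PathPair

section ShapeOfSolutions

open Finset

variable {N : ℕ} {W U V X Y p q : ℕ → ℝ} {a b l l₁ l₂ : ℝ}

namespace IsPathSolution

theorem sum_sub_mul_eq_zero (hN : 2 ≤ N) (hU : IsPathSolution N W l U) :
    ∑ k ∈ Icc 1 N, (W k - l) * U k = 0 := by
  have h := inner_pathOp_pathVec hN W hU.toIsNeumann fun _ ↦ 1
  rw [(pathOp_pathVec_eq_smul_iff hN hU.toIsNeumann).2 hU, real_inner_smul_left,
    inner_pathVec] at h
  simp only [mul_one, sub_self, mul_zero, sum_const_zero, zero_add] at h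
  simp only [sub_mul, sum_sub_distrib, ← mul_sum, h, sub_self]

/-- For `a = 0` the left-hand side of `hsum` is a first integral of the recurrence. -/
theorem boundary_sq_eq_sum (hU : IsPathSolution N (fun k ↦ a * k + b) l U) :
    (2 * (l - b) - a) * U 1 ^ 2 + (2 * (a * N + b - l) + a) * U N ^ 2
      = a * ∑ k ∈ Icc 1 N, (2 + (a * k + b) - l) * U k ^ 2 := by
  have hsum (n : ℕ) (hn : n ≤ N) : 2 * (U (n + 1) ^ 2 + U n ^ 2)
      - (2 * (2 + (a * n + b) - l) + a) * (U n * U (n + 1))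
      = (2 * (l - b) - a) * U 1 ^ 2 - a * ∑ k ∈ Icc 1 n, (2 + (a * k + b) - l) * U k ^ 2 := by
    induction n with
    | zero =>
      simp only [zero_add, hU.left, CharP.cast_eq_zero, Icc_eq_empty_of_lt one_pos, sum_empty]
      ring
    | succ n ih =>
      have hrec := hU.add_eq n (by omega)
      rw [← eq_sub_iff_add_eq] at hrec
      rw [sum_Icc_succ_top (by omega), mul_add a, ← sub_sub, ← ih (by omega), hrec]
      push_cast
      ring
  have hlast := hsum N le_rfl
  rw [hU.right] at hlast
  linarith

theorem antitoneOn (hX : IsPathSolution N W l X) (hW : Monotone W) {m : ℕ}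
    (hnonneg : ∀ k ∈ Icc m N, 0 ≤ X k) (hstart : X (m + 1) ≤ X m) :
    AntitoneOn X (Set.Icc m N) := by
  have hincr (k : ℕ) (hk : k < N) :
      X (k + 2) - X (k + 1) = X (k + 1) - X k + (W (k + 1) - l) * X (k + 1) := by
    linear_combination hX.add_eq k hk
  have hlt_of_lt (k : ℕ) (hmk : m ≤ k) (hk : k ≤ N) (hlt : X k < X (k + 1)) : l < W k := by
    induction k, hmk using Nat.le_induction with
    | base => exact absurd hstart hlt.not_ge
    | succ k hmk ih =>
      by_contra! hle
      have := hnonneg (k + 1) (mem_Icc.2 ⟨by omega, hk⟩)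
      have := ih (by omega) (by nlinarith [hincr k hk])
      linarith [hW k.le_succ]
  refine antitoneOn_of_add_one_le Set.ordConnected_Icc fun j _ hj _ ↦ ?_
  by_contra! hlt
  have hlt' (k : ℕ) (hjk : j ≤ k) (hk : k ≤ N) : X k < X (k + 1) := by
    induction k, hjk using Nat.le_induction with
    | base => exact hlt
    | succ k hjk ih =>
      have := hnonneg (k + 1) (mem_Icc.2 ⟨by linarith [hj.1], hk⟩)
      have := hlt_of_lt k (hj.1.trans hjk) (by omega) (ih (by omega))
      nlinarith [hincr k hk, hW k.le_succ, ih (by omega)]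
  exact (hlt' N hj.2 le_rfl).ne' hX.right

theorem le_of_le_of_le (hX : IsPathSolution N W l X) (hW : Monotone W) {c : ℝ} {k j : ℕ}
    (hnonneg : ∀ i ∈ Icc k N, 0 ≤ X i) (hk : c ≤ X k) (hN : c ≤ X N) (hkj : k ≤ j) (hj : j ≤ N) :
    c ≤ X j := by
  obtain ⟨d, rfl⟩ := Nat.exists_eq_add_of_le hkj
  induction d generalizing k with
  | zero => exact hk
  | succ d ih =>
    rcases le_total (X (k + 1)) (X k) with hle | hle
    · exact hN.trans (hX.antitoneOn hW hnonneg hle ⟨hkj, hj⟩ ⟨hkj.trans hj, le_rfl⟩ hj)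
    · have hnonneg' (i) (hi : i ∈ Icc (k + 1) N) : 0 ≤ X i :=
        hnonneg i (Icc_subset_Icc_left k.le_succ hi)
      rw [← add_assoc, add_right_comm] at hj ⊢
      exact ih hnonneg' (hk.trans hle) (by omega) hj

end IsPathSolution

/-- A discrete Sturm comparison, through the Casoratian `X k * Y (k + 1) - X (k + 1) * Y k`. -/
theorem le_of_recurrence_le {m : ℕ} (hX : ∀ k < m, X (k + 2) + X k = p (k + 1) * X (k + 1))
    (hY : ∀ k < m, Y (k + 2) + Y k = q (k + 1) * Y (k + 1)) (hpq : ∀ k < m, p (k + 1) ≤ q (k + 1))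
    (hpos : ∀ k ≤ m, 0 < X k) (h0 : X 0 ≤ Y 0) (hcas : X 1 * Y 0 ≤ X 0 * Y 1) :
    ∀ k ≤ m, X k ≤ Y k := by
  suffices h : ∀ k ≤ m, X k ≤ Y k ∧ X (k + 1) * Y k ≤ X k * Y (k + 1) from fun k hk ↦ (h k hk).1
  intro k hk
  induction k with
  | zero => exact ⟨h0, hcas⟩
  | succ k ih =>
    obtain ⟨hle, hcas⟩ := ih (by omega)
    have hXk := hpos k (by omega)
    have hXk' := hpos (k + 1) hk
    have hle' : X (k + 1) ≤ Y (k + 1) := by nlinarith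
    refine ⟨hle', ?_⟩
    have := mul_le_mul_of_nonneg_right (hpq k hk) (mul_nonneg hXk'.le (hXk'.le.trans hle'))
    linear_combination hcas + this + Y (k + 1) * hX k hk - X (k + 1) * hY k hk

namespace IsPathPair

theorem le_fst (hN : 2 ≤ N) (h : IsPathPair N W l₁ l₂ U V) {m : ℝ} (hm : ∀ k ∈ Icc 1 N, m ≤ W k) :
    m ≤ l₁ := by
  by_contra! hlt
  refine (sum_pos (fun k hk ↦ ?_) ⟨1, mem_Icc.2 ⟨le_rfl, by omega⟩⟩).ne'
    (h.isPathSolution_fst.sum_sub_mul_eq_zero hN)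
  exact mul_pos (by linarith [hm k hk]) (h.fst_pos k hk)

theorem fst_le (hN : 2 ≤ N) (h : IsPathPair N W l₁ l₂ U V) {m : ℝ} (hm : ∀ k ∈ Icc 1 N, W k ≤ m) :
    l₁ ≤ m := by
  by_contra! hlt
  refine (sum_neg (fun k hk ↦ ?_) ⟨1, mem_Icc.2 ⟨le_rfl, by omega⟩⟩).ne
    (h.isPathSolution_fst.sum_sub_mul_eq_zero hN)
  exact mul_neg_of_neg_of_pos (by linarith [hm k hk]) (h.fst_pos k hk)

theorem snd_mul_fst_le (h : IsPathPair N W l₁ l₂ U V) {k j : ℕ} (hk : k ∈ Icc 1 N)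
    (hj : j ∈ Icc 1 N) (hkj : k ≤ j) : V k * U j ≤ V j * U k := by
  rw [← div_le_div_iff₀ (h.fst_pos k hk) (h.fst_pos j hj)]
  exact h.monotoneOn_div (mem_Icc.1 hk) (mem_Icc.1 hj) hkj

theorem snd_nonneg_of_le (h : IsPathPair N W l₁ l₂ U V) {k j : ℕ} (hk : k ∈ Icc 1 N)
    (hj : j ∈ Icc 1 N) (hkj : k ≤ j) (hVk : 0 ≤ V k) : 0 ≤ V j :=
  nonneg_of_mul_nonneg_left
    ((mul_nonneg hVk (h.fst_pos j hj).le).trans (h.snd_mul_fst_le hk hj hkj)) (h.fst_pos k hk)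

/-- Otherwise, `V / U - ε` is orthogonal to `1` and to the position with respect to the positive
weight `U * (U + ε * V)`, which is impossible for a nonzero monotone function. -/
theorem exists_fst_add_mul_snd_nonpos (h : IsPathPair N W l₁ l₂ U V)
    (hmean : ∑ k ∈ Icc 1 N, (k : ℝ) * U k ^ 2 = ∑ k ∈ Icc 1 N, (k : ℝ) * V k ^ 2) {ε : ℝ}
    (hε : ε ^ 2 = 1) : ∃ k ∈ Icc 1 N, U k + ε * V k ≤ 0 := by
  by_contra! hpos
  have hterm (k) (hk : k ∈ Icc 1 N) :
      U k * (U k + ε * V k) * (V k / U k - ε) = ε * (V k ^ 2 - U k ^ 2) := by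
    have := (h.fst_pos k hk).ne'
    field_simp
    linear_combination -(U k * V k) * hε
  have hmono : MonotoneOn (fun k ↦ V k / U k - ε) (Icc 1 N) := by
    simpa only [coe_Icc, sub_eq_add_neg] using h.monotoneOn_div.add_const (-ε)
  have hzero := eq_zero_of_sum_mul_eq_zero (g := fun k ↦ (k : ℝ))
    (r := fun k ↦ U k * (U k + ε * V k)) (fun k hk ↦ mul_pos (h.fst_pos k hk) (hpos k hk)) hmono
    (Nat.strictMono_cast.strictMonoOn _) ?_ ?_
  · have hinner : ∑ k ∈ Icc 1 N, U k * V k = ∑ k ∈ Icc 1 N, ε * U k ^ 2 :=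
      sum_congr rfl fun k hk ↦ by
        rw [(div_eq_iff (h.fst_pos k hk).ne').1 (sub_eq_zero.1 (hzero k hk))]
        ring
    rw [h.sum_fst_mul_snd, ← mul_sum, h.sum_fst_sq, mul_one] at hinner
    simp [← hinner] at hε
  · rw [sum_congr rfl hterm, ← mul_sum, sum_sub_distrib, h.sum_fst_sq, h.sum_snd_sq, sub_self,
      mul_zero]
  · have hterm' (k) (hk : k ∈ Icc 1 N) : U k * (U k + ε * V k) * (V k / U k - ε) * k
        = ε * (k * V k ^ 2 - k * U k ^ 2) := by rw [hterm k hk]; ring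
    rw [sum_congr rfl hterm', ← mul_sum, sum_sub_distrib, hmean, sub_self, mul_zero]

theorem snd_one_le_neg_fst_one (h : IsPathPair N W l₁ l₂ U V)
    (hmean : ∑ k ∈ Icc 1 N, (k : ℝ) * U k ^ 2 = ∑ k ∈ Icc 1 N, (k : ℝ) * V k ^ 2) :
    V 1 ≤ -U 1 := by
  obtain ⟨k, hk, hneg⟩ := h.exists_fst_add_mul_snd_nonpos hmean (one_pow 2)
  have h1 : 1 ∈ Icc 1 N := mem_Icc.2 ⟨le_rfl, (mem_Icc.1 hk).1.trans (mem_Icc.1 hk).2⟩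
  have := h.snd_mul_fst_le h1 hk (mem_Icc.1 hk).1
  nlinarith [h.fst_pos k hk, h.fst_pos 1 h1]

theorem fst_last_le_snd_last (h : IsPathPair N W l₁ l₂ U V)
    (hmean : ∑ k ∈ Icc 1 N, (k : ℝ) * U k ^ 2 = ∑ k ∈ Icc 1 N, (k : ℝ) * V k ^ 2) :
    U N ≤ V N := by
  obtain ⟨k, hk, hneg⟩ := h.exists_fst_add_mul_snd_nonpos hmean (ε := -1) (by norm_num)
  have hN : N ∈ Icc 1 N := mem_Icc.2 ⟨(mem_Icc.1 hk).1.trans (mem_Icc.1 hk).2, le_rfl⟩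
  have := h.snd_mul_fst_le hk hN (mem_Icc.1 hk).2
  nlinarith [h.fst_pos k hk, h.fst_pos N hN]

theorem neg_snd_one_lt_snd_last (hN : 2 ≤ N) (ha : 0 < a)
    (h : IsPathPair N (fun k ↦ a * k + b) l₁ l₂ U V)
    (hmean : ∑ k ∈ Icc 1 N, (k : ℝ) * U k ^ 2 = ∑ k ∈ Icc 1 N, (k : ℝ) * V k ^ 2) :
    -V 1 < V N := by
  have hle : a + b ≤ l₁ := h.le_fst hN fun k hk ↦ by
    have : (1 : ℝ) ≤ k := by exact_mod_cast (mem_Icc.1 hk).1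
    nlinarith
  have hge : l₁ ≤ a * N + b := h.fst_le hN fun k hk ↦ by
    have : (k : ℝ) ≤ N := by exact_mod_cast (mem_Icc.1 hk).2
    nlinarith
  have hfst := h.isPathSolution_fst.boundary_sq_eq_sum
  have hsnd := h.isPathSolution_snd.boundary_sq_eq_sum
  have hsum (l : ℝ) (X : ℕ → ℝ) (hX : ∑ k ∈ Icc 1 N, X k ^ 2 = 1) :
      ∑ k ∈ Icc 1 N, (2 + (a * k + b) - l) * X k ^ 2
        = 2 + b - l + a * ∑ k ∈ Icc 1 N, (k : ℝ) * X k ^ 2 := by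
    have hterm (k : ℕ) : (2 + (a * k + b) - l) * X k ^ 2
        = (2 + b - l) * X k ^ 2 + a * (k * X k ^ 2) := by ring
    simp only [hterm, sum_add_distrib, ← mul_sum, hX, mul_one]
  rw [hsum l₁ U h.sum_fst_sq] at hfst
  rw [hsum l₂ V h.sum_snd_sq, ← hmean] at hsnd
  have hV1 := h.snd_one_le_neg_fst_one hmean
  have hVN := h.fst_last_le_snd_last hmean
  have hU1 := h.fst_pos 1 (mem_Icc.2 ⟨le_rfl, by omega⟩)
  have hUN := h.fst_pos N (mem_Icc.2 ⟨by omega, le_rfl⟩)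
  have hsq : V 1 ^ 2 < V N ^ 2 := by
    have hsq1 : U 1 ^ 2 ≤ V 1 ^ 2 := by nlinarith
    have hsqN : U N ^ 2 ≤ V N ^ 2 := by nlinarith
    have hlow := mul_nonneg (by linarith : 0 ≤ 2 * (l₁ - b) - a) (sub_nonneg.2 hsq1)
    have hhigh := mul_nonneg (by linarith : 0 ≤ 2 * (a * N + b - l₁) + a) (sub_nonneg.2 hsqN)
    nlinarith [mul_pos ha (sub_pos.2 h.lt), h.lt]
  nlinarith

theorem antitoneOn_fst (hN : 2 ≤ N) (h : IsPathPair N W l₁ l₂ U V) (hW : Monotone W) :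
    AntitoneOn U (Set.Icc 0 N) := by
  have hsol := h.isPathSolution_fst
  refine hsol.antitoneOn hW (fun k hk ↦ ?_) hsol.left.ge
  cases k with
  | zero => exact hsol.left.symm ▸ (h.fst_pos 1 (mem_Icc.2 ⟨le_rfl, by omega⟩)).le
  | succ k => exact (h.fst_pos _ (mem_Icc.2 ⟨by omega, (mem_Icc.1 hk).2⟩)).le

theorem two_mul_sum_cast_mul_fst_sq_le (hN : 2 ≤ N) (h : IsPathPair N W l₁ l₂ U V)
    (hW : Monotone W) : 2 * ∑ k ∈ Icc 1 N, (k : ℝ) * U k ^ 2 ≤ N + 1 := by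
  have hanti : AntitoneOn (fun k ↦ U k ^ 2) (Icc 1 N) := fun i hi j hj hij ↦ by
    have hi := mem_Icc.1 (mem_coe.1 hi)
    have hj := mem_Icc.1 (mem_coe.1 hj)
    exact pow_le_pow_left₀ (h.fst_pos j (mem_Icc.2 hj)).le
      (h.antitoneOn_fst hN hW ⟨i.zero_le, hi.2⟩ ⟨j.zero_le, hj.2⟩ hij) 2
  have hcheb := ((Nat.mono_cast (α := ℝ)).monotoneOn _).antivaryOn hanti
    |>.card_mul_sum_le_sum_mul_sum
  rw [h.sum_fst_sq, Nat.card_Icc, Nat.add_sub_cancel] at hcheb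
  have hN' : (0 : ℝ) < N := by exact_mod_cast (by omega : 0 < N)
  refine le_of_mul_le_mul_left ?_ hN'
  linarith [sum_Icc_one_cast_mul_two N]

theorem neg_snd_le_snd_reflect (h : IsPathPair N W l₁ l₂ U V) (hW : Monotone W)
    (hends : -V 1 ≤ V N) {k : ℕ} (hk : k ∈ Icc 1 N) (hkN : 2 * k ≤ N + 1) (hVk : V k < 0) :
    -V k ≤ V (N + 1 - k) := by
  have hV := h.isPathSolution_snd
  have hk' := mem_Icc.1 hk
  have hneg (j : ℕ) (hj1 : 1 ≤ j) (hjk : j ≤ k) : V j < 0 := by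
    by_contra! hVj
    exact hVk.not_ge (h.snd_nonneg_of_le (mem_Icc.2 ⟨hj1, by omega⟩) hk hjk hVj)
  refine le_of_recurrence_le (m := k) (X := fun j ↦ -V j) (Y := fun j ↦ V (N + 1 - j))
    (p := fun j ↦ 2 + W j - l₂) (q := fun j ↦ 2 + W (N + 1 - j) - l₂)
    (fun j hj ↦ ?_) (fun j hj ↦ hV.reflect.add_eq j (by omega)) (fun j hj ↦ ?_) (fun j hj ↦ ?_)
    ?_ ?_ k le_rfl
  · linear_combination -hV.add_eq j (by omega)
  · linarith [hW (by omega : j + 1 ≤ N + 1 - (j + 1))]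
  · cases j with
    | zero => simpa [hV.left] using hneg 1 le_rfl hk'.1
    | succ j => simpa using hneg (j + 1) (by omega) hj
  · simpa [hV.left, hV.right] using hends
  · simp [hV.left, hV.right]

theorem snd_one_le (hN : 2 ≤ N) (h : IsPathPair N W l₁ l₂ U V) (hW : Monotone W) (hV1 : V 1 ≤ 0)
    {k : ℕ} (hk : k ∈ Icc 1 N) : V 1 ≤ V k := by
  have hk' := mem_Icc.1 hk
  have h1 : 1 ∈ Icc 1 N := mem_Icc.2 ⟨le_rfl, by omega⟩
  have hU : U k ≤ U 1 := h.antitoneOn_fst hN hW ⟨by omega, by omega⟩ ⟨k.zero_le, hk'.2⟩ hk'.1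
  refine le_of_mul_le_mul_right ?_ (h.fst_pos 1 h1)
  exact (mul_le_mul_of_nonpos_left hU hV1).trans (h.snd_mul_fst_le h1 hk hk'.1)

/-- If `V` exceeds `-V 1` at some `s` in the left half, then `V ^ 2 - V 1 ^ 2` changes sign only
once, at the first such `s`. -/
theorem sum_two_mul_sub_mul_snd_sq_pos_of_exists (hN : 2 ≤ N) (h : IsPathPair N W l₁ l₂ U V)
    (hW : Monotone W) (hV1 : V 1 ≤ -U 1) (hends : -V 1 < V N)
    (hs : ∃ s ∈ Icc 1 N, 2 * s ≤ N + 1 ∧ -V 1 ≤ V s) :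
    0 < ∑ k ∈ Icc 1 N, (2 * (k : ℝ) - (N + 1)) * V k ^ 2 := by
  classical
  obtain ⟨s, ⟨hs, hsN, hVs⟩, hmin⟩ := Nat.findX hs
  have hs' := mem_Icc.1 hs
  have hU1 := h.fst_pos 1 (mem_Icc.2 ⟨le_rfl, by omega⟩)
  have hlow (k) (hk : k ∈ Icc 1 N) (hks : k < s) : V k ^ 2 ≤ V 1 ^ 2 := by
    have hlt : V k < -V 1 := by
      by_contra! hge
      exact hmin k hks ⟨hk, by omega, hge⟩
    nlinarith [h.snd_one_le hN hW (by linarith) hk]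
  have hhigh (k) (hk : k ∈ Icc 1 N) (hsk : s ≤ k) : V 1 ^ 2 ≤ V k ^ 2 := by
    have hnonneg (i) (hi : i ∈ Icc s N) : 0 ≤ V i :=
      h.snd_nonneg_of_le hs (Icc_subset_Icc_left hs'.1 hi) (mem_Icc.1 hi).1 (by linarith)
    have hge := h.isPathSolution_snd.le_of_le_of_le hW hnonneg hVs hends.le hsk (mem_Icc.1 hk).2
    nlinarith
  have hmass : ∑ k ∈ Icc 1 N, V k ^ 2 ≤ N * V 1 ^ 2 := calc
    ∑ k ∈ Icc 1 N, V k ^ 2 = ∑ k ∈ Icc 1 N, U k ^ 2 := h.sum_snd_sq.trans h.sum_fst_sq.symm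
    _ ≤ #(Icc 1 N) • V 1 ^ 2 := sum_le_card_nsmul _ _ _ fun k hk ↦ by
      have hk' := mem_Icc.1 hk
      have hUk := h.antitoneOn_fst hN hW ⟨by omega, by omega⟩ ⟨k.zero_le, hk'.2⟩ hk'.1
      nlinarith [h.fst_pos k hk]
    _ = N * V 1 ^ 2 := by rw [Nat.card_Icc, Nat.add_sub_cancel, nsmul_eq_mul]
  exact sum_two_mul_sub_mul_pos_of_crossing (by omega) hsN hlow hhigh (by nlinarith) hmass

theorem snd_sq_le_snd_reflect_sq (h : IsPathPair N W l₁ l₂ U V) (hW : Monotone W)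
    (hends : -V 1 < V N) {k : ℕ} (hk : k ∈ Icc 1 N) (hkN : 2 * k ≤ N + 1) (hVk : V k ≤ -V 1) :
    V k ^ 2 ≤ V (N + 1 - k) ^ 2 := by
  have hk' := mem_Icc.1 hk
  rcases lt_or_ge (V k) 0 with hneg | hnonneg
  · nlinarith [h.neg_snd_le_snd_reflect hW hends.le hk hkN hneg]
  · have hnonneg' (i) (hi : i ∈ Icc k N) : 0 ≤ V i :=
      h.snd_nonneg_of_le hk (Icc_subset_Icc_left hk'.1 hi) (mem_Icc.1 hi).1 hnonneg
    have hle := h.isPathSolution_snd.le_of_le_of_le hW hnonneg' le_rfl (hVk.trans hends.le)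
      (by omega : k ≤ N + 1 - k) (by omega)
    nlinarith

theorem sum_two_mul_sub_mul_snd_sq_pos (hN : 2 ≤ N) (h : IsPathPair N W l₁ l₂ U V)
    (hW : Monotone W) (hV1 : V 1 ≤ -U 1) (hends : -V 1 < V N) :
    0 < ∑ k ∈ Icc 1 N, (2 * (k : ℝ) - (N + 1)) * V k ^ 2 := by
  by_cases hs : ∃ s ∈ Icc 1 N, 2 * s ≤ N + 1 ∧ -V 1 ≤ V s
  · exact h.sum_two_mul_sub_mul_snd_sq_pos_of_exists hN hW hV1 hends hs
  · push Not at hs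
    refine sum_two_mul_sub_mul_pos hN
      (fun k hk hkN ↦ h.snd_sq_le_snd_reflect_sq hW hends hk hkN (hs k hk hkN).le) ?_
    have hU1 := h.fst_pos 1 (mem_Icc.2 ⟨le_rfl, by omega⟩)
    nlinarith

theorem sum_cast_mul_sq_ne (hN : 2 ≤ N) (ha : 0 < a)
    (h : IsPathPair N (fun k ↦ a * k + b) l₁ l₂ U V) :
    ∑ k ∈ Icc 1 N, (k : ℝ) * U k ^ 2 ≠ ∑ k ∈ Icc 1 N, (k : ℝ) * V k ^ 2 := by
  intro hmean
  have hW : Monotone fun k : ℕ ↦ a * (k : ℝ) + b := (Nat.mono_cast.const_mul ha.le).add_const b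
  have hfst := h.two_mul_sum_cast_mul_fst_sq_le hN hW
  have hsnd := h.sum_two_mul_sub_mul_snd_sq_pos hN hW (h.snd_one_le_neg_fst_one hmean)
    (h.neg_snd_one_lt_snd_last hN ha hmean)
  simp only [sub_mul, mul_assoc, sum_sub_distrib, ← mul_sum, h.sum_snd_sq] at hsnd
  linarith

end IsPathPair

end ShapeOfSolutions

section Slope

open Finset
open scoped RealInnerProductSpace

variable {N : ℕ} {W U V : ℕ → ℝ} {l₁ l₂ : ℝ}

theorem IsPathPair.fst_lt_one_add (hN : 2 ≤ N) (h : IsPathPair N W l₁ l₂ U V) : l₁ < 1 + W 1 := by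
  have hrec := h.isPathSolution_fst.add_eq 0 (by omega)
  rw [h.isPathSolution_fst.left] at hrec
  have hU1 := h.fst_pos 1 (mem_Icc.2 ⟨le_rfl, by omega⟩)
  have hU2 := h.fst_pos 2 (mem_Icc.2 ⟨by omega, hN⟩)
  nlinarith

theorem IsLowestPair.le_snd_of_forall_le (hN : 2 ≤ N) {u v : EuclideanSpace ℝ (Fin N)}
    (h : IsLowestPair (pathOp N W) l₁ l₂ u v) {m : ℝ} (hm : ∀ k ∈ Icc 2 N, m ≤ W k) : m ≤ l₂ := by
  refine h.le_snd_of_forall_inner_eq_zero (pathVec N (Pi.single 1 1)) fun x hx ↦ ?_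
  obtain ⟨X, hX, rfl⟩ := exists_isNeumann_pathVec_eq (by omega) x
  have hX1 : X 1 = 0 := by
    simpa [inner_pathVec, Pi.single_apply, (by omega : 1 ≤ N)] using hx
  rw [inner_pathOp_pathVec hN W hX, norm_pathVec_sq, mul_sum]
  refine (sum_le_sum fun k hk ↦ ?_).trans
    (le_add_of_nonneg_left (sum_nonneg fun k _ ↦ mul_self_nonneg _))
  rcases eq_or_ne k 1 with rfl | hk1
  · simp [hX1]
  · have hle := hm k (mem_Icc.2 ⟨by have := mem_Icc.1 hk; omega, (mem_Icc.1 hk).2⟩)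
    rw [mul_assoc, ← sq]
    gcongr

theorem IsPathPair.slope_sub_one_le_gap (hN : 2 ≤ N) {a b : ℝ} (ha : 0 ≤ a)
    (h : IsPathPair N (fun k ↦ a * k + b) l₁ l₂ U V) : a - 1 ≤ l₂ - l₁ := by
  have hfst := h.fst_lt_one_add hN
  have hsnd : 2 * a + b ≤ l₂ := h.le_snd_of_forall_le hN fun k hk ↦ by
    have : (2 : ℝ) ≤ k := by exact_mod_cast (mem_Icc.1 hk).1
    nlinarith
  push_cast at hfst
  linarith

theorem gap_const_le_gap_linear (hN : 2 ≤ N) {a b m₁ m₂ : ℝ} (ha : 0 ≤ a)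
    (h₀ : TwoSmallest (pathH N fun _ ↦ b) m₁ m₂)
    (h : TwoSmallest (pathH N fun k ↦ a * k + b) l₁ l₂) : m₂ - m₁ ≤ l₂ - l₁ := by
  choose L₁ L₂ U V hpair using fun t : ℝ ↦ exists_isPathPair hN fun k ↦ t * k + b
  have hlow (t : ℝ) : IsLowestPair (pathOp N (fun _ ↦ b) + t • positionOp N) (L₁ t) (L₂ t)
      (pathVec N (U t)) (pathVec N (V t)) := pathOp_linear N t b ▸ (hpair t).toIsLowestPair
  obtain ⟨rfl, rfl⟩ := h.unique (hpair a).twoSmallest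
  obtain ⟨rfl, rfl⟩ := h₀.unique (m₁ := L₁ 0) (m₂ := L₂ 0) (by simpa using (hpair 0).twoSmallest)
  obtain ⟨A, hA⟩ : ∃ A, A = a + (L₂ 0 - L₁ 0) + 2 := ⟨_, rfl⟩
  have hgap0 := (hpair 0).lt
  obtain ⟨t, ⟨ht0, htA⟩, hmin⟩ := isCompact_Icc.exists_isMinOn
    (Set.nonempty_Icc.2 (by linarith : 0 ≤ A)) (IsLowestPair.continuous_gap hlow).continuousOn
  rcases ht0.eq_or_lt with rfl | ht0
  · exact hmin ⟨ha, by linarith⟩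
  rcases htA.eq_or_lt with rfl | htA
  · have hle : L₂ t - L₁ t ≤ L₂ 0 - L₁ 0 := hmin ⟨le_rfl, ht0.le⟩
    linarith [(hpair t).slope_sub_one_le_gap hN ht0.le]
  · have hcrit := IsLowestPair.inner_apply_eq_of_isLocalMin_gap hlow
      (hmin.isLocalMin (Icc_mem_nhds ht0 htA))
    rw [inner_positionOp_pathVec, inner_positionOp_pathVec] at hcrit
    exact ((hpair t).sum_cast_mul_sq_ne hN ht0 hcrit).elim

end Slope

section ConstantPotential

open Finset Real

variable {N : ℕ} {U : ℕ → ℝ} {b θ : ℝ}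

theorem cos_sub_half_add_two (k θ : ℝ) :
    cos ((k + 2 - 1 / 2) * θ) + cos ((k - 1 / 2) * θ) = 2 * cos θ * cos ((k + 1 - 1 / 2) * θ) := by
  rw [cos_add_cos]
  ring_nf

theorem IsPathSolution.mul_cos_half_eq
    (hU : IsPathSolution N (fun _ ↦ b) (b + 2 * (1 - cos θ)) U) :
    ∀ k ≤ N + 1, U k * cos (θ / 2) = U 1 * cos ((k - 1 / 2) * θ) := by
  intro k
  induction k using Nat.twoStepInduction with
  | zero => intro; rw [hU.left, ← cos_neg]; push_cast; ring_nf
  | one => intro; push_cast; ring_nf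
  | more k ih₁ ih₂ =>
    intro hk
    have hrec := hU.add_eq k (by omega)
    have hcos := cos_sub_half_add_two k θ
    have h₁ := ih₁ (by omega)
    have h₂ := ih₂ (by omega)
    push_cast at h₂ ⊢
    linear_combination cos (θ / 2) * hrec - U 1 * hcos - h₁ + 2 * cos θ * h₂

theorem isEigen_pathH_const_iff (hN : 2 ≤ N) (hθ : θ ∈ Set.Ioo 0 π) :
    IsEigen (pathH N fun _ ↦ b) (b + 2 * (1 - cos θ)) ↔ sin (N * θ) = 0 := by
  have hsin : sin (θ / 2) ≠ 0 :=
    (sin_pos_of_pos_of_lt_pi (by linarith [hθ.1]) (by linarith [hθ.1, hθ.2])).ne'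
  have hcos : cos (θ / 2) ≠ 0 :=
    (cos_pos_of_mem_Ioo ⟨by linarith [hθ.1, pi_pos], by linarith [hθ.2]⟩).ne'
  have hends : cos (((N + 1 : ℕ) - 1 / 2) * θ) = cos ((N - 1 / 2) * θ) ↔ sin (N * θ) = 0 := by
    have hdiff : cos (((N + 1 : ℕ) - 1 / 2) * θ) - cos ((N - 1 / 2) * θ)
        = -2 * sin (N * θ) * sin (θ / 2) := by
      rw [cos_sub_cos]
      push_cast
      ring_nf
    rw [← sub_eq_zero, hdiff, mul_eq_zero_iff_right hsin, mul_eq_zero_iff_left (by norm_num)]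
  rw [isEigen_pathH_iff hN, ← hends]
  constructor
  · rintro ⟨U, hU, hU1⟩
    refine mul_left_cancel₀ hU1 ?_
    rw [← hU.mul_cos_half_eq _ le_rfl, ← hU.mul_cos_half_eq N N.le_succ, hU.right]
  · intro hends
    refine ⟨fun k ↦ cos ((k - 1 / 2) * θ), ⟨⟨?_, hends⟩, fun k _ ↦ ?_⟩, ?_⟩
    · rw [← cos_neg]
      push_cast
      ring_nf
    · have := cos_sub_half_add_two k θ
      push_cast
      linarith
    · convert hcos using 2
      push_cast
      ring

theorem IsPathPair.fst_const {l₁ l₂ : ℝ} {V : ℕ → ℝ} (hN : 2 ≤ N)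
    (h : IsPathPair N (fun _ ↦ b) l₁ l₂ U V) : l₁ = b :=
  le_antisymm (h.fst_le hN fun _ _ ↦ le_rfl) (h.le_fst hN fun _ _ ↦ le_rfl)

theorem twoSmallest_pathH_const (hN : 2 ≤ N) (b : ℝ) :
    TwoSmallest (pathH N fun _ ↦ b) b (b + 2 * (1 - cos (π / N))) := by
  obtain ⟨l₁, l₂, U, V, h⟩ := exists_isPathPair hN fun _ ↦ b
  obtain rfl := h.fst_const hN
  suffices hl₂ : l₂ = l₁ + 2 * (1 - cos (π / N)) from hl₂ ▸ h.twoSmallest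
  have hN' : (2 : ℝ) ≤ N := by exact_mod_cast hN
  have hpi : π / N ∈ Set.Ioo 0 π :=
    ⟨by positivity, div_lt_self pi_pos (by linarith)⟩
  have hcos : cos (π / N) < 1 := cos_zero ▸ cos_lt_cos_of_nonneg_of_le_pi le_rfl hpi.2.le hpi.1
  refine le_antisymm ((h.twoSmallest.2.2.2 _ ?_).2 (by linarith)) ?_
  · rw [isEigen_pathH_const_iff hN hpi, mul_div_cancel₀ _ (by linarith), sin_pi]
  · by_contra! hlt
    have hlt₁₂ := h.lt
    obtain ⟨θ, hθ, hcosθ⟩ := intermediate_value_Ioo' hpi.1.le continuous_cos.continuousOn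
      (⟨by linarith, by linarith [cos_zero]⟩ : 1 - (l₂ - l₁) / 2 ∈ Set.Ioo (cos (π / N)) (cos 0))
    obtain rfl : l₁ + 2 * (1 - cos θ) = l₂ := by rw [hcosθ]; ring
    have hsin := (isEigen_pathH_const_iff hN ⟨hθ.1, hθ.2.trans hpi.2⟩).1 h.twoSmallest.2.1
    have hlt_pi : N * θ < π := (lt_div_iff₀' (by linarith)).1 hθ.2
    exact (sin_pos_of_pos_of_lt_pi (mul_pos (by linarith) hθ.1) hlt_pi).ne' hsin

end ConstantPotential

/-- for every `N ≥ 2` and linear potential `L i = a * i + b`, the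
fundamental gap of `H_L(P_N)` is at least `2(1 - cos(π/N))`, with equality when
`a = 0`. -/
theorem path_gap_linear (N : ℕ) (hN : 2 ≤ N) (a b : ℝ)
    (l1 l2 : ℝ)
    (h : TwoSmallest (pathH N (fun i => a * (i : ℝ) + b)) l1 l2) :
    l2 - l1 ≥ 2 * (1 - Real.cos (Real.pi / N)) ∧
    (a = 0 → l2 - l1 = 2 * (1 - Real.cos (Real.pi / N))) := by
  have hfree := twoSmallest_pathH_const hN
  refine ⟨?_, fun ha ↦ ?_⟩
  · rcases le_total 0 a with ha | ha
    · have hgap := gap_const_le_gap_linear hN ha (hfree b) h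
      linarith
    · have hreflect : TwoSmallest (pathH N fun k ↦ -a * k + (a * (N + 1) + b)) l1 l2 :=
        h.congr fun _ ↦ isEigen_pathH_reflect_iff hN fun k hk ↦ by
          have hk' := Finset.mem_Icc.1 hk
          rw [Nat.cast_sub (by omega)]
          push_cast
          ring
      have hgap := gap_const_le_gap_linear hN (neg_nonneg.2 ha) (hfree _) hreflect
      linarith
  · subst ha
    obtain ⟨rfl, rfl⟩ := TwoSmallest.unique (by simpa using h) (hfree b)
    ring
end
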